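/- arXiv:1907.04636 — 2 statements merged into one kernel-verified Lean document; each statement's English description precedes it below -/
import Mathlib

section
/- Suppose 0<q<1, σ>0 and γ∈{0,1}. Then all zeros of the entire function z ↦ λ_{γ,σ}(z;q) are real and simple, and they occur in symmetric pairs ±z. -/
noncomputable def qPochInf (a q : ℝ) : ℝ := ∏' k : ℕ, (1 - a * q ^ k)

noncomputable def qGamma (q x : ℝ) : ℝ :=
  qPochInf q q * (1 - q) ^ (1 - x) / qPochInf (q ^ x) q

noncomputable def qML (γ σ q : ℝ) (z : ℂ) : ℂ :=
  ∑' n : ℕ,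
    (((-1) ^ n * σ ^ (2 * n) * q ^ (n * (n - 1)) / qGamma q (2 * n + γ + 1) : ℝ) : ℂ) * z ^ (2 * n)

noncomputable def qMLR (γ σ q : ℝ) (x : ℝ) : ℝ :=
  ∑' n : ℕ,
    ((-1) ^ n * σ ^ (2 * n) * q ^ (n * (n - 1)) / qGamma q (2 * n + γ + 1)) * x ^ (2 * n)

def condR (q γ : ℝ) : Prop :=
  (γ = 0 ∨ γ = 1) ∨
    (γ ∈ Set.Ioo (0 : ℝ) 2 ∧ γ ≠ 1 ∧
      1 < q⁻¹ * (1 - q) * (1 - q ^ (γ + 1)) * (1 - q ^ (γ + 2)))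

noncomputable def radiusStarlike (α : ℝ) (f : ℂ → ℂ) : ℝ :=
  sSup {r : ℝ | 0 < r ∧ ∀ z : ℂ, 0 < ‖z‖ → ‖z‖ < r →
    α < (z * deriv f z / f z).re}

noncomputable def radiusConvex (α : ℝ) (f : ℂ → ℂ) : ℝ :=
  sSup {r : ℝ | 0 < r ∧ ∀ z : ℂ, ‖z‖ < r →
    α < (1 + z * deriv (deriv f) z / deriv f z).re}

noncomputable def fML (γ σ q : ℝ) (z : ℂ) : ℂ :=
  Complex.exp ((1 / ((γ : ℂ) + 1)) *
    Complex.log (z ^ ((γ : ℂ) + 1) * (qGamma q (γ + 1) : ℂ) * qML γ σ q z))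

noncomputable def gML (γ σ q : ℝ) (z : ℂ) : ℂ :=
  z * (qGamma q (γ + 1) : ℂ) * qML γ σ q z

noncomputable def hML (γ σ q : ℝ) (z : ℂ) : ℂ :=
  z * (qGamma q (γ + 1) : ℂ) *
    ∑' n : ℕ,
      (((-1) ^ n * σ ^ (2 * n) * q ^ (n * (n - 1)) / qGamma q (2 * n + γ + 1) : ℝ) : ℂ) * z ^ n

noncomputable def hMLR (γ σ q : ℝ) (x : ℝ) : ℝ :=
  x * qGamma q (γ + 1) *
    ∑' n : ℕ,
      ((-1) ^ n * σ ^ (2 * n) * q ^ (n * (n - 1)) / qGamma q (2 * n + γ + 1)) * x ^ n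

open Filter Topology

lemma aux_sum_zero {t : ℕ → ℝ} (ht : ∀ k, 0 ≤ t k)
    (h : Tendsto (fun N => ∑ k ∈ Finset.range N, t k) atTop (𝓝 0)) (k : ℕ) : t k = 0 := by
  refine le_antisymm ?_ (ht k)
  refine ge_of_tendsto h ?_
  filter_upwards [eventually_gt_atTop k] with N hN
  exact Finset.single_le_sum (f := t) (fun i _ => ht i) (Finset.mem_range.2 hN)

lemma aux_qpow {q : ℝ} (hq0 : 0 < q) (hq1 : q < 1) :
    Tendsto (fun N : ℕ => (q : ℂ) ^ N) atTop (𝓝 0) := by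
  apply tendsto_pow_atTop_nhds_zero_of_norm_lt_one
  simp [abs_of_pos hq0, hq1]

lemma aux_f0 {f : ℂ → ℂ} (hf : Differentiable ℂ f) {q r : ℝ} (hq0 : 0 < q) (hq1 : q < 1)
    (hr : 0 < r) (x c : ℂ) (hc : c ≠ 0) (E : ℕ → ℂ) (hE : Tendsto E atTop (𝓝 0))
    (h : ∀ N, E N = c * ((∑ k ∈ Finset.range N, r ^ k * ‖f ((q : ℂ) ^ k * (q * x))‖ ^ 2 : ℝ) : ℂ)) :
    f 0 = 0 := by
  have h1 : Tendsto (fun N => ∑ k ∈ Finset.range N, r ^ k * ‖f ((q : ℂ) ^ k * (q * x))‖ ^ 2)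
      atTop (𝓝 0) := by
    have h2 : Tendsto (fun N => ‖c‖⁻¹ * ‖E N‖) atTop (𝓝 0) := by
      simpa using (hE.norm).const_mul (‖c‖⁻¹)
    refine h2.congr fun N => ?_
    rw [h N, norm_mul, Complex.norm_real, Real.norm_of_nonneg, ← mul_assoc, inv_mul_cancel₀, one_mul]
    · exact norm_ne_zero_iff.2 hc
    · exact Finset.sum_nonneg fun i _ => by positivity
  have h3 : ∀ k, f ((q : ℂ) ^ k * (q * x)) = 0 := by
    intro k
    have := aux_sum_zero (fun k => by positivity) h1 k
    have hrk : r ^ k ≠ 0 := (pow_pos hr k).ne'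
    simpa [hrk] using this
  have h4 : Tendsto (fun N : ℕ => f ((q : ℂ) ^ N * (q * x))) atTop (𝓝 (f 0)) := by
    have := (aux_qpow hq0 hq1).mul_const ((q : ℂ) * x)
    rw [zero_mul] at this
    exact (hf.continuous.tendsto 0).comp this
  simp only [h3] at h4
  exact tendsto_nhds_unique h4 tendsto_const_nhds

lemma aux_slope {f : ℂ → ℂ} (hf : HasDerivAt f 0 0) {q : ℝ} (hq0 : 0 < q) (hq1 : q < 1) (x : ℂ) :
    Tendsto (fun N : ℕ => ((q : ℂ) ^ N)⁻¹ * (f ((q : ℂ) ^ N * x) - f 0)) atTop (𝓝 0) := by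
  have h1 : HasDerivAt (fun t : ℂ => f (t * x)) 0 0 := by
    have h2 : HasDerivAt (fun t : ℂ => t * x) x 0 := by
      simpa using (hasDerivAt_id (0 : ℂ)).mul_const x
    have h3 : HasDerivAt f 0 ((0 : ℂ) * x) := by simpa using hf
    have := h3.comp (0 : ℂ) h2
    simpa [Function.comp_def] using this
  rw [hasDerivAt_iff_tendsto_slope] at h1
  have h4 : Tendsto (fun N : ℕ => (q : ℂ) ^ N) atTop (𝓝[≠] 0) := by
    refine tendsto_nhdsWithin_iff.2 ⟨aux_qpow hq0 hq1, Eventually.of_forall fun n => ?_⟩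
    simp [hq0.ne']
  refine (h1.comp h4).congr fun N => ?_
  simp [slope]

lemma aux_bdd {e : ℕ → ℂ} {s : ℝ} (hs0 : 0 ≤ s) (hs1 : s ≤ 1) (he : Tendsto e atTop (𝓝 0)) :
    Tendsto (fun N => (s : ℂ) ^ N * e N) atTop (𝓝 0) := by
  refine squeeze_zero_norm (fun N => ?_) (tendsto_zero_iff_norm_tendsto_zero.1 he)
  rw [norm_mul, norm_pow, Complex.norm_real, Real.norm_of_nonneg hs0]
  exact mul_le_of_le_one_left (norm_nonneg _) (pow_le_one₀ hs0 hs1)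

lemma aux_ident {f : ℂ → ℂ} {q A B K : ℂ}
    (feq : ∀ x, f x - A * f (q * x) + B * f (q * (q * x)) = -(K * x ^ 2) * f (q * x))
    (x y : ℂ) (N : ℕ) :
    f x * f (q * y) - f (q * x) * f y =
      B ^ N * (f (q ^ N * x) * f (q ^ N * (q * y)) - f (q ^ N * (q * x)) * f (q ^ N * y))
      - K * ((x ^ 2 - y ^ 2) * ∑ k ∈ Finset.range N, (B * q ^ 2) ^ k *
        (f (q ^ k * (q * x)) * f (q ^ k * (q * y)))) := by
  induction N with
  | zero => simp
  | succ N ih =>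
    rw [ih, Finset.sum_range_succ]
    have hx := feq (q ^ N * x)
    have hy := feq (q ^ N * y)
    have e1 : ∀ w : ℂ, q * (q ^ N * w) = q ^ N * (q * w) := fun w => by ring
    have e2 : ∀ w : ℂ, q ^ (N + 1) * w = q ^ N * (q * w) := fun w => by ring
    simp only [e1] at hx hy
    simp only [e2]
    have e3 : (B * q ^ 2) ^ N = B ^ N * (q ^ N) ^ 2 := by ring
    rw [e3, pow_succ B]
    linear_combination B ^ N * f (q ^ N * (q * y)) * hx - B ^ N * f (q ^ N * (q * x)) * hy

theorem core2 {f : ℂ → ℂ} (hf : Differentiable ℂ f) {q A B K : ℝ} (hq0 : 0 < q) (hq1 : q < 1)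
    (hB0 : 0 < B) (hB1 : B * q ≤ 1) (hK : 0 < K)
    (heven : ∀ z, f (-z) = f z) (hconj : ∀ z, f (starRingEnd ℂ z) = starRingEnd ℂ (f z))
    (h0 : f 0 ≠ 0) (him : ∀ t : ℝ, f (t * Complex.I) ≠ 0)
    (feq : ∀ x, f x - A * f (q * x) + B * f (q * (q * x)) = -(K * x ^ 2) * f (q * x))
    (z : ℂ) (hz : f z = 0) : z.im = 0 ∧ deriv f z ≠ 0 ∧ f (-z) = 0 := by
  have hd0 : deriv f 0 = 0 := by
    have h1 : HasDerivAt f (deriv f 0) 0 := (hf 0).hasDerivAt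
    have h2 : HasDerivAt (fun w => f (-w)) (-deriv f 0) 0 := by
      have h3 : HasDerivAt f (deriv f 0) (-(0 : ℂ)) := by simpa using h1
      have := h3.comp (0 : ℂ) (hasDerivAt_neg (0 : ℂ))
      simpa [Function.comp_def] using this
    simp only [heven] at h2
    have := h1.unique h2
    linear_combination this / 2
  have hr : 0 < B * q ^ 2 := by positivity
  have hs0 : 0 ≤ B * q := by positivity
  have hqN : ∀ N : ℕ, ((q : ℂ) ^ N) ≠ 0 := fun N => by simp [hq0.ne']
  have hlim : ∀ {g : ℂ → ℂ} (_ : Continuous g) (w : ℂ),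
      Tendsto (fun N : ℕ => g ((q : ℂ) ^ N * w)) atTop (𝓝 (g 0)) := by
    intro g hg w
    have := (aux_qpow hq0 hq1).mul_const w
    rw [zero_mul] at this
    exact (hg.tendsto 0).comp this
  have hreal : z.im = 0 := by
    by_contra him0
    set y := starRingEnd ℂ z with hy
    have hfy : f y = 0 := by rw [hy, hconj, hz, map_zero]
    have hre : z.re ≠ 0 := by
      intro hre
      apply him z.im
      have : (z.im : ℂ) * Complex.I = z := by
        apply Complex.ext <;> simp [hre]
      rw [this, hz]
    have hne : z ^ 2 - y ^ 2 ≠ 0 := by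
      intro h
      have := congrArg Complex.im h
      simp [hy, pow_two] at this
      have h3 : z.re * z.im = 0 := by linarith
      rcases mul_eq_zero.1 h3 with h | h <;> contradiction
    apply h0
    refine aux_f0 hf hq0 hq1 hr z (K * (z ^ 2 - y ^ 2))
      (mul_ne_zero (by exact_mod_cast hK.ne') hne)
      (fun N => (B : ℂ) ^ N * (f (q ^ N * z) * f (q ^ N * (q * y)) -
        f (q ^ N * (q * z)) * f (q ^ N * y))) ?_ ?_
    · have hd : HasDerivAt f 0 0 := by
        have h9 := (hf 0).hasDerivAt
        rwa [hd0] at h9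
      have S := fun w => aux_slope hd hq0 hq1 w
      have hb := (((S z).mul (hlim hf.continuous (q * y))).add ((S (q * y)).const_mul (f 0))).sub
        (((S (q * z)).mul (hlim hf.continuous y)).add ((S y).const_mul (f 0)))
      simp only [zero_mul, mul_zero, add_zero, sub_zero] at hb
      refine (aux_bdd hs0 hB1 hb).congr fun N => ?_
      have := hqN N
      push_cast
      rw [mul_pow]
      field_simp
      ring
    · intro N
      have := aux_ident feq z y N
      rw [hz, hfy] at this
      have e : ((∑ k ∈ Finset.range N, (B * q ^ 2) ^ k * ‖f ((q : ℂ) ^ k * (q * z))‖ ^ 2 : ℝ) : ℂ)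
          = ∑ k ∈ Finset.range N, ((B : ℂ) * q ^ 2) ^ k *
        (f (q ^ k * (q * z)) * f (q ^ k * (q * y))) := by
        push_cast
        refine Finset.sum_congr rfl fun k _ => ?_
        have : (q : ℂ) ^ k * (q * y) = starRingEnd ℂ ((q : ℂ) ^ k * (q * z)) := by
          simp [hy]
        rw [this, hconj, Complex.mul_conj, Complex.normSq_eq_norm_sq]
        push_cast
        rfl
      rw [e]
      linear_combination -this
  refine ⟨hreal, ?_, by rw [heven, hz]⟩
  intro hdz
  have hz0 : z ≠ 0 := by rintro rfl; exact h0 hz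
  have hzc : starRingEnd ℂ z = z := Complex.conj_eq_iff_im.2 hreal
  apply h0
  have hcd : Continuous (deriv f) := (hf.contDiff (n := 1)).continuous_deriv le_rfl
  refine aux_f0 hf hq0 hq1 hr z (-(K * (2 * z)))
    (neg_ne_zero.2 (mul_ne_zero (by exact_mod_cast hK.ne') (mul_ne_zero two_ne_zero hz0)))
    (fun N => (B : ℂ) ^ N * (f (q ^ N * z) * (deriv f (q ^ N * (q * z)) * (q ^ N * q)) -
        f (q ^ N * (q * z)) * (deriv f (q ^ N * z) * q ^ N))) ?_ ?_
  · have hb := ((hlim hf.continuous z).mul ((hlim hcd (q * z)).mul_const (q : ℂ))).sub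
      ((hlim hf.continuous (q * z)).mul (hlim hcd z))
    simp only [hd0, zero_mul, mul_zero, sub_zero] at hb
    refine (aux_bdd hs0 hB1 hb).congr fun N => ?_
    push_cast
    ring
  · intro N
    have hcomp : ∀ c : ℂ, HasDerivAt (fun y => f (c * y)) (deriv f (c * z) * c) z := by
      intro c
      have h2 : HasDerivAt (fun t : ℂ => c * t) c z := by
        simpa using (hasDerivAt_id z).const_mul c
      exact (hf (c * z)).hasDerivAt.comp z h2
    have hcomp2 : ∀ c : ℂ, HasDerivAt (fun y => f (c * (q * y))) (deriv f (c * (q * z)) * (c * q)) z := by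
      intro c
      have := hcomp (c * q)
      simpa only [mul_assoc] using this
    have hL : HasDerivAt (fun y => f z * f (q * y) - f (q * z) * f y)
        (f z * (deriv f (q * z) * q) - f (q * z) * deriv f z) z :=
      ((hcomp q).const_mul _).sub ((hf z).hasDerivAt.const_mul _)
    have hP : DifferentiableAt ℂ (fun y => ∑ k ∈ Finset.range N, ((B : ℂ) * q ^ 2) ^ k *
        (f (q ^ k * (q * z)) * f (q ^ k * (q * y)))) z := by
      fun_prop
    have hsq : HasDerivAt (fun y : ℂ => z ^ 2 - y ^ 2) (-(2 * z)) z := by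
      simpa using (hasDerivAt_pow 2 z).const_sub (z ^ 2)
    have hR := ((((hcomp2 ((q : ℂ) ^ N)).const_mul (f (q ^ N * z))).sub
      ((hcomp ((q : ℂ) ^ N)).const_mul (f (q ^ N * (q * z))))).const_mul ((B : ℂ) ^ N)).sub
      ((hsq.mul hP.hasDerivAt).const_mul (K : ℂ))
    have hR' := hR.congr_of_eventuallyEq (f₁ := fun y => f z * f (q * y) - f (q * z) * f y)
      (Eventually.of_forall fun y => aux_ident feq z y N)
    have := hL.unique hR'
    rw [hz, hdz] at this
    have e : ((∑ k ∈ Finset.range N, (B * q ^ 2) ^ k * ‖f ((q : ℂ) ^ k * (q * z))‖ ^ 2 : ℝ) : ℂ)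
          = ∑ k ∈ Finset.range N, ((B : ℂ) * q ^ 2) ^ k *
        (f (q ^ k * (q * z)) * f (q ^ k * (q * z))) := by
      push_cast
      refine Finset.sum_congr rfl fun k _ => ?_
      have h5 : starRingEnd ℂ (f ((q : ℂ) ^ k * (q * z))) = f ((q : ℂ) ^ k * (q * z)) := by
        rw [← hconj]; simp [hzc]
      have h6 := Complex.mul_conj (f ((q : ℂ) ^ k * (q * z)))
      rw [h5, Complex.normSq_eq_norm_sq] at h6
      rw [h6]
      push_cast
      rfl
    rw [e]
    linear_combination -this

theorem core1 {b : ℕ → ℝ} {g q K : ℝ} (hq0 : 0 < q) (hq1 : q < 1) (hg : g = 1 ∨ g = q)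
    (hK : 0 < K) (hb : ∀ n, 0 < b n)
    (hrec : ∀ n, b (n + 1) * ((1 - g * q ^ (2 * n + 1)) * (1 - g * q ^ (2 * n + 2)))
      = K * q ^ (2 * n) * b n)
    (z : ℂ) (hz : (∑' n : ℕ, (((-1) ^ n * b n : ℝ) : ℂ) * z ^ (2 * n)) = 0) :
    z.im = 0 ∧ deriv (fun z : ℂ => ∑' n : ℕ, (((-1) ^ n * b n : ℝ) : ℂ) * z ^ (2 * n)) z ≠ 0 ∧
     (∑' n : ℕ, (((-1) ^ n * b n : ℝ) : ℂ) * (-z) ^ (2 * n)) = 0 := by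
  have hg0 : 0 < g := by rcases hg with rfl | rfl <;> linarith
  have hg1 : g ≤ 1 := by rcases hg with rfl | rfl <;> linarith
  have hsumR : ∀ R : ℝ, 0 ≤ R → Summable fun n => b n * R ^ (2 * n) := by
    intro R hR
    have hlow : ∀ m : ℕ, 1 - q ≤ 1 - g * q ^ (m + 1) := by
      intro m
      have h1 : q ^ (m + 1) ≤ q := by
        rw [pow_succ]
        exact mul_le_of_le_one_left hq0.le (pow_le_one₀ hq0.le hq1.le)
      have h2 : g * q ^ (m + 1) ≤ q ^ (m + 1) := mul_le_of_le_one_left (by positivity) hg1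
      linarith
    have hq' : 0 < 1 - q := by linarith
    have hbd : ∀ n, b (n + 1) ≤ K / (1 - q) ^ 2 * q ^ (2 * n) * b n := by
      intro n
      have h1 : (1 - q) ^ 2 ≤ (1 - g * q ^ (2 * n + 1)) * (1 - g * q ^ (2 * n + 2)) := by
        rw [pow_two]
        exact mul_le_mul (hlow _) (hlow _) hq'.le (hq'.le.trans (hlow _))
      have h2 := mul_le_mul_of_nonneg_left h1 (hb (n + 1)).le
      rw [hrec n] at h2
      have : K / (1 - q) ^ 2 * q ^ (2 * n) * b n = (K * q ^ (2 * n) * b n) / (1 - q) ^ 2 := by ring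
      rw [this, le_div_iff₀ (by positivity)]
      exact h2
    have ht : Tendsto (fun n : ℕ => K / (1 - q) ^ 2 * (q ^ 2) ^ n * R ^ 2) atTop (𝓝 0) := by
      have := ((tendsto_pow_atTop_nhds_zero_of_lt_one (sq_nonneg q)
        (pow_lt_one₀ hq0.le hq1 two_ne_zero)).const_mul (K / (1 - q) ^ 2)).mul_const (R ^ 2)
      simpa using this
    refine summable_of_ratio_norm_eventually_le (r := 1 / 2) (by norm_num) ?_
    filter_upwards [ht.eventually_le_const (show (0 : ℝ) < 1 / 2 by norm_num)] with n hn
    have p1 : 0 ≤ b (n + 1) * R ^ (2 * (n + 1)) := mul_nonneg (hb _).le (by positivity)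
    have p2 : 0 ≤ b n * R ^ (2 * n) := mul_nonneg (hb _).le (by positivity)
    rw [Real.norm_of_nonneg p1, Real.norm_of_nonneg p2]
    calc b (n + 1) * R ^ (2 * (n + 1)) ≤ (K / (1 - q) ^ 2 * q ^ (2 * n) * b n) * R ^ (2 * (n + 1)) :=
          mul_le_mul_of_nonneg_right (hbd n) (by positivity)
      _ = (K / (1 - q) ^ 2 * (q ^ 2) ^ n * R ^ 2) * (b n * R ^ (2 * n)) := by ring
      _ ≤ _ := mul_le_mul_of_nonneg_right hn p2
  have hnorm : ∀ n (w : ℂ), ‖(((-1) ^ n * b n : ℝ) : ℂ) * w ^ (2 * n)‖ = b n * ‖w‖ ^ (2 * n) := by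
    intro n w
    rw [norm_mul, Complex.norm_real, norm_mul, norm_pow, norm_pow, Real.norm_of_nonneg (hb n).le]
    simp
  have hsum : ∀ w : ℂ, Summable fun n => (((-1) ^ n * b n : ℝ) : ℂ) * w ^ (2 * n) := by
    intro w
    refine Summable.of_norm ?_
    simp only [hnorm]
    exact hsumR _ (norm_nonneg _)
  have hzero : (∑' n : ℕ, (((-1) ^ n * b n : ℝ) : ℂ) * (0 : ℂ) ^ (2 * n)) = b 0 := by
    rw [tsum_eq_single 0]
    · simp
    · intro n hn; simp [hn]
  refine core2 (f := fun z : ℂ => ∑' n : ℕ, (((-1) ^ n * b n : ℝ) : ℂ) * z ^ (2 * n))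
    (q := q) (A := g / q + g) (B := g ^ 2 / q) (K := K) ?_ hq0 hq1 (by positivity) ?_ hK ?_ ?_ ?_ ?_ ?_ z hz
  · intro w
    have := Complex.differentiableOn_tsum_of_summable_norm (U := Metric.ball 0 (‖w‖ + 1))
      (F := fun n (z : ℂ) => (((-1) ^ n * b n : ℝ) : ℂ) * z ^ (2 * n))
      (hsumR (‖w‖ + 1) (by positivity)) (fun n => by fun_prop) Metric.isOpen_ball ?_
    · exact this.differentiableAt (Metric.isOpen_ball.mem_nhds (by simp))
    · intro n v hv
      rw [hnorm]
      have : ‖v‖ ≤ ‖w‖ + 1 := by simpa using (mem_ball_zero_iff.1 hv).le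
      have := hb n
      gcongr
  · rw [div_mul_cancel₀ _ hq0.ne']
    exact pow_le_one₀ hg0.le hg1
  · intro w
    simp only [pow_mul, neg_sq]
  · intro w
    rw [Complex.conj_tsum]
    refine tsum_congr fun n => ?_
    simp
  · simp only [hzero]
    exact_mod_cast (hb 0).ne'
  · intro t
    have e : (fun n : ℕ => (((-1) ^ n * b n : ℝ) : ℂ) * ((t : ℂ) * Complex.I) ^ (2 * n))
        = fun n => ((b n * |t| ^ (2 * n) : ℝ) : ℂ) := by
      funext n
      have : ((t : ℂ) * Complex.I) ^ (2 * n) = (-1) ^ n * (t : ℂ) ^ (2 * n) := by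
        rw [mul_pow, pow_mul Complex.I, Complex.I_sq, mul_comm]
      rw [this, pow_mul |t|, sq_abs, ← pow_mul]
      push_cast
      have h1 : ((-1 : ℂ) ^ n) * (-1) ^ n = 1 := by rw [← mul_pow]; simp
      linear_combination (b n : ℂ) * (t : ℂ) ^ (2 * n) * h1
    simp only [e]
    rw [← Complex.ofReal_tsum]
    have : 0 < ∑' n, b n * |t| ^ (2 * n) :=
      (hsumR |t| (abs_nonneg t)).tsum_pos (fun n => mul_nonneg (hb n).le (by positivity)) 0
        (by simpa using hb 0)
    exact_mod_cast this.ne'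
  · intro x
    have s0 := (hsum x).hasSum
    have s1 := (hsum (q * x)).hasSum
    have s2 := (hsum (q * (q * x))).hasSum
    have hL := (s0.sub (s1.mul_left (((g / q + g : ℝ) : ℂ)))).add
      (s2.mul_left (((g ^ 2 / q : ℝ) : ℂ)))
    have hR := s1.mul_left (-((K : ℂ) * x ^ 2))
    refine hL.unique ?_
    rw [← hasSum_nat_add_iff' 1]
    have hqc : (q : ℂ) ≠ 0 := by exact_mod_cast hq0.ne'
    have hh : (1 - (g : ℂ) / q) * (1 - g) = 0 := by
      rcases hg with rfl | rfl
      · simp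
      · simp [hqc]
    convert hR using 1
    · rfl
    · funext n
      have := congrArg (fun r : ℝ => (r : ℂ)) (hrec n)
      push_cast at this ⊢
      have e : (1 - (g : ℂ) * q ^ (2 * n + 1)) * (1 - g * q ^ (2 * n + 2)) =
        1 - (g / q + g) * q ^ (2 * (n + 1)) + g ^ 2 / q * (q ^ (2 * (n + 1)) * q ^ (2 * (n + 1))) := by
        field_simp
        ring
      rw [e] at this
      simp only [mul_pow]
      linear_combination (-1) ^ (n + 1) * x ^ (2 * (n + 1)) * this
    · rw [Finset.sum_range_one]
      have : (b 0 : ℂ) - ((g : ℂ) / q + g) * b 0 + g ^ 2 / q * b 0 = 0 := by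
        linear_combination (b 0 : ℂ) * hh
      simp only [mul_zero, pow_zero, mul_one, one_mul]
      push_cast
      linear_combination -this

lemma aux_summable {a q : ℝ} (hq0 : 0 < q) (hq1 : q < 1) : Summable fun k : ℕ => -(a * q ^ k) :=
  ((summable_geometric_of_lt_one hq0.le hq1).mul_left a).neg

lemma qPochInf_pos {a q : ℝ} (hq0 : 0 < q) (hq1 : q < 1) (ha0 : 0 < a) (ha1 : a < 1) :
    0 < qPochInf a q := by
  unfold qPochInf
  have h := Real.summable_log_one_add_of_summable (aux_summable (a := a) hq0 hq1)
  simp only [← sub_eq_add_neg] at h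
  rw [← Real.rexp_tsum_eq_tprod _ h]
  · exact Real.exp_pos _
  · intro k
    have : a * q ^ k ≤ a := mul_le_of_le_one_right ha0.le (pow_le_one₀ hq0.le hq1.le)
    linarith

lemma qPochInf_succ {a q : ℝ} (hq0 : 0 < q) (hq1 : q < 1) :
    qPochInf a q = (1 - a) * qPochInf (a * q) q := by
  unfold qPochInf
  have h := Real.multipliable_one_add_of_summable (aux_summable (a := a * q) hq0 hq1)
  simp only [← sub_eq_add_neg] at h
  have e : ∀ k : ℕ, 1 - a * q ^ (k + 1) = 1 - a * q * q ^ k := fun k => by ring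
  rw [tprod_eq_zero_mul']
  · simp [e]
  · simpa [e] using h

lemma qGamma_pos {q x : ℝ} (hq0 : 0 < q) (hq1 : q < 1) (hx : 0 < x) : 0 < qGamma q x := by
  unfold qGamma
  have h1 := qPochInf_pos hq0 hq1 hq0 hq1
  have h2 := qPochInf_pos hq0 hq1 (Real.rpow_pos_of_pos hq0 x) (Real.rpow_lt_one hq0.le hq1 hx)
  have h3 : 0 < (1 - q) ^ (1 - x) := Real.rpow_pos_of_pos (by linarith) _
  positivity

lemma qGamma_succ {q x : ℝ} (hq0 : 0 < q) (hq1 : q < 1) (hx : 0 < x) :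
    qGamma q (x + 1) * (1 - q) = (1 - q ^ x) * qGamma q x := by
  unfold qGamma
  have h1 := qPochInf_succ (a := q ^ x) hq0 hq1
  have h2 := qPochInf_pos hq0 hq1 (Real.rpow_pos_of_pos hq0 x) (Real.rpow_lt_one hq0.le hq1 hx)
  have h3 := qPochInf_pos hq0 hq1 (Real.rpow_pos_of_pos hq0 (x + 1))
    (Real.rpow_lt_one hq0.le hq1 (by linarith))
  have h4 : (1 - q) ^ (1 - x) = (1 - q) ^ (1 - (x + 1)) * (1 - q) := by
    rw [← Real.rpow_add_one (by linarith)]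
    congr 1
    ring
  rw [Real.rpow_add_one hq0.ne'] at *
  rw [h4]
  rw [h1] at h2 ⊢
  have h5 : (1 - q ^ x) ≠ 0 := left_ne_zero_of_mul h2.ne'
  have h6 := h3.ne'
  field_simp

theorem stmt1 (q σ γ : ℝ) (hq0 : 0 < q) (hq1 : q < 1) (hσ : 0 < σ)
    (hγ : γ = 0 ∨ γ = 1) :
    ∀ z : ℂ, qML γ σ q z = 0 →
      z.im = 0 ∧ deriv (qML γ σ q) z ≠ 0 ∧ qML γ σ q (-z) = 0 := by
  have hγ0 : 0 ≤ γ := by rcases hγ with rfl | rfl <;> norm_num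
  have hG : ∀ n : ℕ, 0 < qGamma q (2 * n + γ + 1) := fun n => qGamma_pos hq0 hq1 (by positivity)
  have e : qML γ σ q = fun z : ℂ => ∑' n : ℕ, (((-1) ^ n *
      (σ ^ (2 * n) * q ^ (n * (n - 1)) / qGamma q (2 * n + γ + 1)) : ℝ) : ℂ) * z ^ (2 * n) := by
    funext z
    unfold qML
    refine tsum_congr fun n => ?_
    congr 2
    ring
  intro z hz
  rw [e] at hz ⊢
  refine core1 (b := fun n : ℕ => σ ^ (2 * n) * q ^ (n * (n - 1)) / qGamma q (2 * n + γ + 1))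
    (g := q ^ γ) (q := q) (K := (σ * (1 - q)) ^ 2) hq0 hq1 ?_ ?_ ?_ ?_ z hz
  · rcases hγ with rfl | rfl <;> simp
  · have : 0 < 1 - q := by linarith
    positivity
  · intro n
    have := hG n
    positivity
  · intro n
    have g1 := qGamma_succ (x := 2 * n + γ + 1) hq0 hq1 (by positivity)
    have g2 := qGamma_succ (x := 2 * n + γ + 1 + 1) hq0 hq1 (by positivity)
    have e1 : q ^ (2 * (n : ℝ) + γ + 1) = q ^ γ * q ^ (2 * n + 1) := by
      rw [← Real.rpow_natCast q (2 * n + 1), ← Real.rpow_add hq0]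
      congr 1
      push_cast
      ring
    have e2 : q ^ (2 * (n : ℝ) + γ + 1 + 1) = q ^ γ * q ^ (2 * n + 2) := by
      rw [← Real.rpow_natCast q (2 * n + 2), ← Real.rpow_add hq0]
      congr 1
      push_cast
      ring
    rw [e1] at g1
    rw [e2] at g2
    have h0 := (hG n).ne'
    have h1 := (hG (n + 1)).ne'
    have e3 : 2 * ((n + 1 : ℕ) : ℝ) + γ + 1 = 2 * n + γ + 1 + 1 + 1 := by push_cast; ring
    rw [e3] at h1
    have e4 : q ^ ((n + 1) * (n + 1 - 1)) = q ^ (n * (n - 1)) * q ^ (2 * n) := by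
      rw [← pow_add]
      congr 1
      cases n with
      | zero => simp
      | succ m => simp only [Nat.add_sub_cancel]; ring
    simp only [e3, e4]
    rw [div_mul_eq_mul_div, ← mul_div_assoc, div_eq_div_iff h1 h0]
    generalize qGamma q (2 * (n : ℝ) + γ + 1) = G0 at *
    generalize qGamma q (2 * (n : ℝ) + γ + 1 + 1) = G1 at *
    generalize qGamma q (2 * (n : ℝ) + γ + 1 + 1 + 1) = G2 at *
    linear_combination (-σ ^ (2 * (n + 1)) * q ^ (n * (n - 1)) * q ^ (2 * n)) *
      ((1 - q) * g2 + (1 - q ^ γ * q ^ (2 * n + 2)) * g1)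
end

section
/- Assume condition (R). Then z ↦ λ_{γ,σ}(z;q) has infinitely many zeros, all real, and for every z∈ℂ the Weierstrassian factorization λ_{γ,σ}(z;q) = (1/Γ_q(γ+1)) · ∏_{n≥1} (1 − z²/ε_{γ,σ,n}(q)²) holds, the infinite product converging uniformly on compact subsets of ℂ. -/
open Filter Topology

def GoodProd (f : ℂ → ℂ) : Prop :=
  ∃ u : ℕ → ℝ, (∀ j, 0 ≤ u j) ∧ Summable u ∧ (∀ t : ℂ, f t = ∏' j, (1 - t * (u j : ℂ))) ∧
    ∀ i j, i ≠ j → u i = u j → u i = 0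

lemma prod_zero_iff (u : ℕ → ℝ) (hs : Summable u) (t : ℂ) :
    ∏' j, (1 - t * (u j : ℂ)) = 0 ↔ ∃ j, t * (u j : ℂ) = 1 := by
  constructor
  · intro h
    by_contra! hne
    have := tprod_one_add_ne_zero_of_summable (f := fun j => - (t * (u j : ℂ)))
      (fun i => by
        rw [← sub_eq_add_neg, sub_ne_zero]; exact (hne i).symm)
      (by
        simp only [norm_neg, norm_mul, Complex.norm_real]
        exact (hs.norm).mul_left _)
    apply this
    simpa [sub_eq_add_neg] using h
  · rintro ⟨j, hj⟩
    exact tprod_of_exists_eq_zero ⟨j, by rw [hj]; simp⟩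

lemma final_step (L f : ℂ → ℂ) (c G : ℝ) (hc : 0 < c) (hG : G ≠ 0)
    (hL : ∀ z, L z = ((1 / G : ℝ) : ℂ) * f (((c : ℂ) * z) ^ 2)) (hf : GoodProd f)
    (ε : ℕ → ℝ) (hmono : StrictMono ε) (hpos : ∀ n, 0 < ε n)
    (hzero : ∀ n, L (ε n : ℂ) = 0)
    (hall : ∀ x : ℝ, 0 < x → L (x : ℂ) = 0 → ∃ n, x = ε n) :
    {z : ℂ | L z = 0}.Infinite ∧
    (∀ z : ℂ, L z = 0 → z.im = 0) ∧
    (∀ z : ℂ, L z = ((1 / G : ℝ) : ℂ) * ∏' n : ℕ, (1 - z ^ 2 / (ε n : ℂ) ^ 2)) ∧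
    (∀ K : Set ℂ, IsCompact K →
      TendstoUniformlyOn
        (fun (N : ℕ) (z : ℂ) =>
          ((1 / G : ℝ) : ℂ) *
            ∏ n ∈ Finset.range N, (1 - z ^ 2 / (ε n : ℂ) ^ 2))
        L Filter.atTop K) := by
  obtain ⟨u, h0, hs, hprod, hinj⟩ := hf
  have hG' : ((1 / G : ℝ) : ℂ) ≠ 0 := by
    rw [Complex.ofReal_ne_zero]; exact one_div_ne_zero hG
  have hzi : ∀ z, L z = 0 ↔ ∃ j, ((c : ℂ) * z) ^ 2 * (u j : ℂ) = 1 := by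
    intro z
    rw [hL, mul_eq_zero, or_iff_right hG', hprod, prod_zero_iff u hs]
  have hzr : ∀ x : ℝ, L x = 0 ↔ ∃ j, (c * x) ^ 2 * u j = 1 := by
    intro x
    rw [hzi]
    refine exists_congr fun j => ?_
    exact_mod_cast Iff.rfl
  choose J hJ using fun n => (hzr (ε n)).1 (hzero n)
  have hJu : ∀ n, u (J n) * c ^ 2 = 1 / (ε n) ^ 2 := by
    intro n
    have := hJ n
    have := (hpos n).ne'
    field_simp
    linarith
  have hJinj : Function.Injective J := by
    intro m n h
    have h1 := hJu m
    have h2 := hJu n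
    rw [h, h2] at h1
    have h3 : ε n ^ 2 = ε m ^ 2 := by
      have := (hpos n).ne'
      have := (hpos m).ne'
      field_simp at h1
      linarith
    have : ε n = ε m := by
      rwa [sq_eq_sq₀ (hpos n).le (hpos m).le] at h3
    exact (hmono.injective this).symm
  have hrange : ∀ j, u j ≠ 0 → j ∈ Set.range J := by
    intro j hj
    have hjp : 0 < u j := lt_of_le_of_ne (h0 j) hj.symm
    have hsq : 0 < Real.sqrt (u j) := Real.sqrt_pos.2 hjp
    obtain ⟨n, hn⟩ := hall (1 / (c * Real.sqrt (u j))) (by positivity)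
      ((hzr _).2 ⟨j, by
        have := Real.sq_sqrt hjp.le
        field_simp
        exact this.symm⟩)
    refine ⟨n, ?_⟩
    by_contra hne
    have h1 : u (J n) = u j := by
      have h2 := hJu n
      rw [← hn] at h2
      have := Real.sq_sqrt hjp.le
      field_simp at h2
      have h3 : u (J n) * c ^ 2 = u j * c ^ 2 := by rw [h2, this]
      exact mul_right_cancel₀ (by positivity) h3
    exact hj (h1 ▸ hinj _ _ hne h1)
  have hprodε : ∀ z : ℂ, f (((c : ℂ) * z) ^ 2) = ∏' n : ℕ, (1 - z ^ 2 / (ε n : ℂ) ^ 2) := by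
    intro z
    rw [hprod, ← hJinj.tprod_eq]
    · congr 1
      ext n
      have h1 : ((u (J n) : ℂ)) * (c : ℂ) ^ 2 = 1 / (ε n : ℂ) ^ 2 := by exact_mod_cast hJu n
      have : ((c : ℂ) * z) ^ 2 * (u (J n) : ℂ) = z ^ 2 * ((u (J n) : ℂ) * (c : ℂ) ^ 2) := by ring
      rw [this, h1]; ring
    · intro j hj
      apply hrange
      rintro h
      simp [h] at hj
  have hsumε : Summable fun n => 1 / (ε n) ^ 2 := by
    have := (hs.comp_injective hJinj).mul_right (c ^ 2)
    refine this.congr fun n => ?_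
    exact hJu n
  have hLe : ∀ z : ℂ, L z = ((1 / G : ℝ) : ℂ) * ∏' n : ℕ, (1 - z ^ 2 / (ε n : ℂ) ^ 2) := by
    intro z; rw [hL, hprodε]
  refine ⟨?_, ?_, hLe, ?_⟩
  · refine Set.infinite_of_injective_forall_mem (f := fun n => (ε n : ℂ)) ?_ hzero
    intro m n h
    exact hmono.injective (Complex.ofReal_injective h)
  · intro z hz
    obtain ⟨j, hj⟩ := (hzi z).1 hz
    have hre := congrArg Complex.re hj
    have him := congrArg Complex.im hj
    simp [pow_two] at hre him
    rcases him with h | h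
    · by_contra hzim
      have hz0 : z.re = 0 := by
        have : c * c * z.im * z.re = 0 := by linarith
        have h2 := mul_ne_zero (mul_ne_zero hc.ne' hc.ne') hzim
        exact (mul_eq_zero.1 this).resolve_left h2
      rw [hz0] at hre
      have := h0 j
      nlinarith [mul_nonneg (mul_self_nonneg (c * z.im)) (h0 j)]
    · rw [h] at hre; simp at hre
  · intro K hK
    obtain ⟨M, hM⟩ := hK.isBounded.exists_norm_le
    have hsum2 : Summable fun n => M ^ 2 * (1 / (ε n) ^ 2) := hsumε.mul_left _
    have h1 := hsum2.hasProdUniformlyOn_nat_one_add (f := fun n z => -(z ^ 2 / (ε n : ℂ) ^ 2)) hK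
      (Eventually.of_forall fun n z hz => by
        have := hM z hz
        rw [norm_neg, norm_div, norm_pow, norm_pow, Complex.norm_real, Real.norm_eq_abs, sq_abs,
          div_eq_mul_one_div]
        gcongr)
      (fun n => by fun_prop)
    have h2 := h1.tendstoUniformlyOn_finsetRange
    have h3 : UniformContinuous fun w : ℂ => ((1 / G : ℝ) : ℂ) * w :=
      uniformContinuous_const_smul (((1 / G : ℝ) : ℂ)) (X := ℂ)
    have h4 := h3.comp_tendstoUniformlyOn h2
    have h5 : L = (fun w : ℂ => ((1 / G : ℝ) : ℂ) * w) ∘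
        fun x => ∏' (i : ℕ), (1 + -(x ^ 2 / (ε i : ℂ) ^ 2)) := by
      ext z; simp only [Function.comp, hLe, sub_eq_add_neg]
    rw [h5]
    simpa only [Function.comp_def, sub_eq_add_neg] using h4

lemma compact_limit (u : ℕ → ℕ → ℝ) (b : ℕ → ℝ) (hb : Summable b) (h0 : ∀ N j, 0 ≤ u N j)
    (hle : ∀ N j, u N j ≤ b j) (f : ℂ → ℂ)
    (hf : ∀ t : ℂ, Tendsto (fun N => ∏' j, (1 - t * (u N j : ℂ))) atTop (𝓝 (f t)))
    (K : ℕ → Set ℝ) (hK : ∀ j, IsClosed (K j)) (huK : ∀ j, ∀ᶠ N in atTop, u N j ∈ K j) :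
    ∃ v : ℕ → ℝ, (∀ j, 0 ≤ v j) ∧ (∀ j, v j ≤ b j) ∧ (∀ j, v j ∈ K j) ∧
      ∀ t : ℂ, f t = ∏' j, (1 - t * (v j : ℂ)) := by
  set W := hyperfilter ℕ
  have hW : (W : Filter ℕ) ≤ atTop := by
    rw [← Nat.cofinite_eq_atTop]; exact hyperfilter_le_cofinite
  have hex : ∀ j, ∃ v ∈ Set.Icc 0 (b j), Tendsto (fun N => u N j) W (𝓝 v) := by
    intro j
    have := isCompact_Icc.ultrafilter_le_nhds (s := Set.Icc 0 (b j)) (W.map fun N => u N j)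
      (by
        rw [le_principal_iff]
        refine mem_map.2 (univ_mem' fun N => ⟨h0 N j, hle N j⟩))
    exact this
  choose v hv hvt using hex
  refine ⟨v, fun j => (hv j).1, fun j => (hv j).2,
    fun j => (hK j).mem_of_tendsto (hvt j) (hW (huK j)), fun t => ?_⟩
  have h1 := tendsto_tprod_one_add_of_dominated_convergence (𝓕 := (W : Filter ℕ))
    (f := fun N j => -(t * (u N j : ℂ))) (g := fun j => -(t * (v j : ℂ)))
    (bound := fun j => ‖t‖ * b j) (hb.mul_left _)
    (fun j => by
      have := (Complex.continuous_ofReal.tendsto (v j)).comp (hvt j)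
      exact (this.const_mul t).neg)
    (Eventually.of_forall fun N j => by
      rw [norm_neg, norm_mul, Complex.norm_real, Real.norm_of_nonneg (h0 N j)]
      have := hle N j
      gcongr)
  simp only [← sub_eq_add_neg] at h1
  exact tendsto_nhds_unique ((hf t).mono_left hW) h1


lemma alt_bound (n : ℕ) : ∀ x : ℕ → ℝ, (∀ k, 0 ≤ x k) → (∀ k, x (k + 1) ≤ x k) →
    0 ≤ ∑ k ∈ Finset.range n, (-1) ^ k * x k ∧ ∑ k ∈ Finset.range n, (-1) ^ k * x k ≤ x 0 := by
  induction n with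
  | zero => intro x h0 _; simp [h0]
  | succ n ih =>
    intro x h0 h1
    have := ih (fun k => x (k + 1)) (fun k => h0 _) (fun k => h1 _)
    have h2 : ∑ k ∈ Finset.range (n + 1), (-1) ^ k * x k
        = x 0 - ∑ k ∈ Finset.range n, (-1) ^ k * x (k + 1) := by
      rw [Finset.sum_range_succ']
      simp only [pow_succ, pow_zero, one_mul, mul_neg, mul_one, neg_mul, Finset.sum_neg_distrib]
      ring
    rw [h2]
    have := h1 0
    simp only [zero_add] at *
    constructor <;> linarith

lemma peak_bound (q : ℝ) (hq0 : 0 < q) (hq1 : q < 1) (T : ℕ → ℝ) (hT : ∀ n, 0 ≤ T n) (m K : ℕ)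
    (hl : ∀ n, n < m → T n ≤ q * T (n + 1)) (hr : ∀ n, m ≤ n → T (n + 1) ≤ q * T n) :
    (1 - 2 * q) * T m ≤ (-1) ^ m * ∑ n ∈ Finset.range (m + 1 + K), (-1) ^ n * T n := by
  have hl' : ∀ n, n < m → T n ≤ T (n + 1) := fun n h => (hl n h).trans (by nlinarith [hT (n + 1)])
  have hr' : ∀ n, m ≤ n → T (n + 1) ≤ T n := fun n h => (hr n h).trans (by nlinarith [hT n])
  have hsq : ((-1 : ℝ) ^ m) * (-1) ^ m = 1 := by rw [← mul_pow]; simp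
  rw [Finset.sum_range_add, Finset.sum_range_succ, mul_add, mul_add]
  have e1 : (-1 : ℝ) ^ m * ((-1) ^ m * T m) = T m := by rw [← mul_assoc, hsq, one_mul]
  have e2 : (-1 : ℝ) ^ m * ∑ x ∈ Finset.range K, (-1) ^ (m + 1 + x) * T (m + 1 + x) =
      - ∑ x ∈ Finset.range K, (-1) ^ x * T (m + 1 + x) := by
    rw [Finset.mul_sum, ← Finset.sum_neg_distrib]
    refine Finset.sum_congr rfl fun x _ => ?_
    rw [pow_add, pow_add]
    linear_combination (-(-1) ^ x * T (m + 1 + x)) * hsq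
  have e3 : (-1 : ℝ) ^ m * ∑ x ∈ Finset.range m, (-1) ^ x * T x =
      - ∑ x ∈ Finset.range m, (-1) ^ x * T (m - 1 - x) := by
    rw [← Finset.sum_range_reflect, Finset.mul_sum, ← Finset.sum_neg_distrib]
    refine Finset.sum_congr rfl fun x hx => ?_
    rw [Finset.mem_range] at hx
    obtain ⟨d, rfl⟩ : ∃ d, m = d + x + 1 := ⟨m - x - 1, by omega⟩
    have h1 : d + x + 1 - 1 - x = d := by omega
    rw [h1, pow_add, pow_add]
    have : ((-1 : ℝ) ^ d) * (-1) ^ d = 1 := by rw [← mul_pow]; simp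
    linear_combination (-(-1) ^ x * T d) * this
  have b2 := alt_bound K (fun x => T (m + 1 + x)) (fun _ => hT _)
    (fun k => hr' (m + 1 + k) (by omega))
  have c2 := hr m le_rfl
  have b3 : ∑ x ∈ Finset.range m, (-1) ^ x * T (m - 1 - x) ≤ q * T m := by
    rcases Nat.eq_zero_or_pos m with h | h
    · subst h; simp; exact mul_nonneg hq0.le (hT 0)
    · have := (alt_bound m (fun x => T (m - 1 - x)) (fun _ => hT _) (fun k => by
        rcases Nat.lt_or_ge k (m - 1) with h' | h'
        · have := hl' (m - 1 - (k + 1)) (by omega)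
          rwa [show m - 1 - (k + 1) + 1 = m - 1 - k by omega] at this
        · rw [show m - 1 - (k + 1) = m - 1 - k by omega])).2
      have h5 := hl (m - 1) (by omega)
      rw [show m - 1 + 1 = m by omega] at h5
      simp only [Nat.sub_zero] at this
      linarith
  rw [e1, e2, e3]
  simp only [add_zero] at b2
  linarith [b2.2]

lemma entire_summable (a ρ : ℕ → ℝ) (hρ : Tendsto ρ atTop atTop) 
    (ha : ∀ n, a n = ρ (n + 1) * a (n + 1)) (x : ℝ) : Summable fun n => a n * x ^ n := by
  refine summable_of_ratio_norm_eventually_le (r := 1 / 2) (by norm_num) ?_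
  have h1 := (tendsto_add_atTop_iff_nat 1).2 hρ
  filter_upwards [h1.eventually_ge_atTop (2 * |x|)] with n hn
  rw [ha n]
  simp only [norm_mul, norm_pow, Real.norm_eq_abs, pow_succ]
  have h2 : |ρ (n + 1)| ≥ 2 * |x| := hn.trans (le_abs_self _)
  have := abs_nonneg (a (n + 1))
  have h3 : 0 ≤ |a (n + 1)| * |x| ^ n := by positivity
  nlinarith

lemma roots_to_prod (N : ℕ) (a r : ℕ → ℝ) (ha0 : a 0 = 1) (hr : ∀ j, j < N → r j ≠ 0)
    (hinj : ∀ i j, i < N → j < N → r i = r j → i = j)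
    (hroot : ∀ j, j < N → ∑ n ∈ Finset.range (N + 1), (-1) ^ n * (a n * r j ^ n) = 0) (t : ℂ) :
    ∑ n ∈ Finset.range (N + 1), (((-1) ^ n * a n : ℝ) : ℂ) * t ^ n =
      ∏ j ∈ Finset.range N, (1 - t * ((1 / r j : ℝ) : ℂ)) := by
  classical
  let P : Polynomial ℝ := ∑ n ∈ Finset.range (N + 1),
    Polynomial.C ((-1) ^ n * a n) * Polynomial.X ^ n
  let Q : Polynomial ℝ := ∏ j ∈ Finset.range N, (1 - Polynomial.X * Polynomial.C (1 / r j))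
  have hPQ : P = Q := by
    have hcard : (insert 0 ((Finset.range N).image r)).card = N + 1 := by
      rw [Finset.card_insert_of_notMem, Finset.card_image_of_injOn, Finset.card_range]
      · intro i hi j hj h
        exact hinj i j (by simpa using hi) (by simpa using hj) h
      · intro h
        obtain ⟨j, hj, h⟩ := Finset.mem_image.1 h
        exact hr j (by simpa using hj) h
    apply Polynomial.eq_of_degrees_lt_of_eval_finset_eq (insert 0 ((Finset.range N).image r))
    · rw [hcard]
      refine lt_of_le_of_lt (Polynomial.degree_le_of_natDegree_le (n := N) ?_)
        (by exact_mod_cast Nat.lt_succ_self N)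
      refine Polynomial.natDegree_sum_le_of_forall_le _ _ fun n hn => ?_
      exact (Polynomial.natDegree_C_mul_X_pow_le _ _).trans (Finset.mem_range_succ_iff.1 hn)
    · rw [hcard]
      refine lt_of_le_of_lt (Polynomial.degree_le_of_natDegree_le (n := N) ?_)
        (by exact_mod_cast Nat.lt_succ_self N)
      refine (Polynomial.natDegree_prod_le _ _).trans ?_
      refine (Finset.sum_le_card_nsmul _ _ 1 fun j _ => ?_).trans (by simp)
      compute_degree
    · intro x hx
      rcases Finset.mem_insert.1 hx with h | h
      · subst h
        simp only [P, Q, Polynomial.eval_finsetSum, Polynomial.eval_prod]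
        rw [Finset.sum_eq_single 0]
        · simp [ha0]
        · intro n _ hn; simp [hn]
        · simp
      · obtain ⟨j, hj, rfl⟩ := Finset.mem_image.1 h
        rw [Finset.mem_range] at hj
        simp only [P, Q, Polynomial.eval_finsetSum, Polynomial.eval_prod]
        rw [Finset.prod_eq_zero (Finset.mem_range.2 hj)]
        · rw [← hroot j hj]
          refine Finset.sum_congr rfl fun n _ => ?_
          simp; ring
        · simp [hr j hj]
  have := congrArg (Polynomial.aeval t) hPQ
  simpa [P, Q, map_sum, map_prod, mul_comm t] using this


lemma hutchinson (q : ℝ) (hq0 : 0 < q) (hq1 : q < 1 / 2) (ρ a : ℕ → ℝ) (hρ0 : 0 < ρ 0)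
    (hρ : ∀ n, ρ n ≤ q ^ 2 * ρ (n + 1)) (ha0 : a 0 = 1)
    (ha : ∀ n, a n = ρ (n + 1) * a (n + 1)) :
    GoodProd (fun t => ∑' n, (((-1) ^ n * a n : ℝ) : ℂ) * t ^ n) := by
  have hq2 : q ^ 2 < 1 := by nlinarith
  have hρpos : ∀ n, 0 < ρ n := by
    intro n
    induction n with
    | zero => exact hρ0
    | succ n ih =>
      have := hρ n
      by_contra! h
      nlinarith [mul_nonneg (sq_nonneg q) (neg_nonneg.2 h)]
  have hapos : ∀ n, 0 < a n := by
    intro n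
    induction n with
    | zero => rw [ha0]; norm_num
    | succ n ih =>
      rw [ha n] at ih
      exact (pos_iff_pos_of_mul_pos ih).1 (hρpos _)
  have hρlt : ∀ n, ρ n < ρ (n + 1) := fun n => by nlinarith [hρ n, hρpos (n + 1)]
  have hρmono : StrictMono ρ := strictMono_nat_of_lt_succ hρlt
  have hρgeo : ∀ n, ρ 0 ≤ (q ^ 2) ^ n * ρ n := by
    intro n
    induction n with
    | zero => simp
    | succ n ih =>
      refine ih.trans ?_
      rw [pow_succ (q ^ 2) n, mul_assoc]
      exact mul_le_mul_of_nonneg_left (hρ n) (by positivity)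
  have hρtop : Tendsto ρ atTop atTop := by
    have h1 : Tendsto (fun n : ℕ => ρ 0 * ((q ^ 2)⁻¹) ^ n) atTop atTop :=
      (tendsto_pow_atTop_atTop_of_one_lt ((one_lt_inv₀ (by positivity)).2 hq2)).const_mul_atTop hρ0
    refine tendsto_atTop_mono (fun n => ?_) h1
    rw [inv_pow, ← div_eq_mul_inv, div_le_iff₀ (by positivity)]
    linarith [hρgeo n]
  have hsum := entire_summable a ρ hρtop ha
  set s : ℕ → ℝ := fun m => ρ m / q with hs
  have hspos : ∀ m, 0 < s m := fun m => div_pos (hρpos m) hq0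
  have hsmono : StrictMono s := fun i j h => div_lt_div_of_pos_right (hρmono h) hq0
  have hpeak : ∀ m N, m ≤ N → (1 - 2 * q) * (a m * s m ^ m) ≤
      (-1) ^ m * ∑ n ∈ Finset.range (N + 1), (-1) ^ n * (a n * s m ^ n) := by
    intro m N hmN
    obtain ⟨K, rfl⟩ := Nat.exists_eq_add_of_le hmN
    rw [show m + K + 1 = m + 1 + K by ring]
    refine peak_bound q hq0 (by linarith) (fun n => a n * s m ^ n)
      (fun n => (mul_pos (hapos n) (pow_pos (hspos m) n)).le) m K ?_ ?_
    · intro n hn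
      have h1 : ρ (n + 1) ≤ ρ m := hρmono.monotone hn
      have h2 : ρ m = q * s m := by simp only [hs]; field_simp
      have h3 : 0 < a (n + 1) * s m ^ n := mul_pos (hapos _) (pow_pos (hspos m) n)
      rw [ha n, pow_succ]
      nlinarith [mul_le_mul_of_nonneg_right h1 h3.le]
    · intro n hn
      have h1 : ρ (m + 1) ≤ ρ (n + 1) := hρmono.monotone (by omega)
      have h2 : s m ≤ q * ρ (m + 1) := by
        simp only [hs]; rw [div_le_iff₀ hq0]; linarith [hρ m]
      have h3 : 0 < a (n + 1) * s m ^ n := mul_pos (hapos _) (pow_pos (hspos m) n)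
      have h4 : s m ≤ q * ρ (n + 1) := h2.trans (by gcongr)
      rw [ha n, pow_succ]
      nlinarith [mul_le_mul_of_nonneg_right h4 h3.le]
  have hδ : ∀ m, 0 < (1 - 2 * q) * (a m * s m ^ m) := fun m =>
    mul_pos (by linarith) (mul_pos (hapos m) (pow_pos (hspos m) m))
  have hroots : ∀ N j, ∃ r : ℝ, j < N → s j < r ∧ r < s (j + 1) ∧
      ∑ n ∈ Finset.range (N + 1), (-1) ^ n * (a n * r ^ n) = 0 := by
    intro N j
    by_cases hj : j < N
    · have h1 := (hδ j).trans_le (hpeak j N hj.le)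
      have h2 := (hδ (j + 1)).trans_le (hpeak (j + 1) N hj)
      rw [pow_succ] at h2
      obtain ⟨r, hr, hr0⟩ := intermediate_value_Ioo' (hsmono (Nat.lt_succ_self j)).le
        (f := fun x => (-1) ^ j * ∑ n ∈ Finset.range (N + 1), (-1) ^ n * (a n * x ^ n))
        (by fun_prop) (show (0 : ℝ) ∈ _ from ⟨by linarith, h1⟩)
      refine ⟨r, fun _ => ⟨hr.1, hr.2, ?_⟩⟩
      exact (mul_eq_zero.1 hr0).resolve_left (by simp)
    · exact ⟨0, fun h => absurd h hj⟩
  choose r hr using hroots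
  have hsumC : ∀ t : ℂ, Summable fun n => (((-1) ^ n * a n : ℝ) : ℂ) * t ^ n := by
    intro t
    refine Summable.of_norm ?_
    refine (hsum ‖t‖).congr fun n => ?_
    simp [abs_of_pos (hapos n)]
  have hb : Summable fun j : ℕ => (q ^ 2) ^ j * (q / ρ 0) :=
    (summable_geometric_of_lt_one (sq_nonneg q) hq2).mul_right _
  have hsb : ∀ j, 1 / s j ≤ (q ^ 2) ^ j * (q / ρ 0) := by
    intro j
    simp only [hs]
    have := hρgeo j
    have := hρpos j
    rw [one_div_div, ← mul_div_assoc, div_le_div_iff₀ this hρ0]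
    nlinarith
  obtain ⟨v, hv0, hvb, hvK, hv⟩ := compact_limit (fun N j => if j < N then 1 / r N j else 0) _ hb
    (by
      intro N j
      split_ifs with h
      · have := (hspos j).trans (hr N j h).1
        positivity
      · exact le_rfl)
    (by
      intro N j
      split_ifs with h
      · refine le_trans ?_ (hsb j)
        exact one_div_le_one_div_of_le (hspos j) (hr N j h).1.le
      · positivity)
    (fun t => ∑' n, (((-1) ^ n * a n : ℝ) : ℂ) * t ^ n)
    (by
      intro t
      have h1 := ((tendsto_add_atTop_iff_nat 1).2 (hsumC t).hasSum.tendsto_sum_nat)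
      refine h1.congr fun N => ?_
      rw [roots_to_prod N a (r N) ha0 (fun j hj => ((hspos j).trans (hr N j hj).1).ne') ?_
        (fun j hj => (hr N j hj).2.2)]
      · rw [tprod_eq_prod (s := Finset.range N)]
        · refine Finset.prod_congr rfl fun j hj => ?_
          rw [if_pos (Finset.mem_range.1 hj)]
        · intro j hj
          rw [if_neg (by simpa using hj)]; simp
      · intro i j hi hj hij
        by_contra hne
        rcases lt_or_gt_of_ne hne with h | h
        · have h1 := hsmono.monotone (show i + 1 ≤ j from h)
          linarith [(hr N i hi).2.1, (hr N j hj).1]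
        · have h1 := hsmono.monotone (show j + 1 ≤ i from h)
          linarith [(hr N j hj).2.1, (hr N i hi).1])
    (fun j => Set.Icc (1 / s (j + 1)) (1 / s j)) (fun j => isClosed_Icc)
    (by
      intro j
      filter_upwards [eventually_gt_atTop j] with N hN
      rw [if_pos hN]
      have h1 := hr N j hN
      have h2 := (hspos j).trans h1.1
      exact ⟨one_div_le_one_div_of_le h2 h1.2.1.le, one_div_le_one_div_of_le (hspos j) h1.1.le⟩)
  refine ⟨v, hv0, hb.of_nonneg_of_le hv0 hvb, hv, ?_⟩
  have hne : ∀ m, ∑' n, (((-1) ^ n * a n : ℝ) : ℂ) * ((s m : ℝ) : ℂ) ^ n ≠ 0 := by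
    intro m h
    have h1 : Summable fun n => (-1 : ℝ) ^ n * (a n * s m ^ n) := by
      refine Summable.of_norm ((hsum (s m)).norm.congr fun n => ?_)
      simp
    have h2 : ∑' n, (-1 : ℝ) ^ n * (a n * s m ^ n) = 0 := by
      have : ((∑' n, (-1 : ℝ) ^ n * (a n * s m ^ n) : ℝ) : ℂ) = 0 := by
        rw [← h, Complex.ofReal_tsum]
        refine tsum_congr fun n => ?_
        push_cast; ring
      exact_mod_cast this
    have h3 := ((tendsto_add_atTop_iff_nat 1).2 h1.hasSum.tendsto_sum_nat).const_mul ((-1 : ℝ) ^ m)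
    rw [h2, mul_zero] at h3
    have h4 := ge_of_tendsto h3 ((eventually_ge_atTop m).mono fun N hN => hpeak m N hN)
    linarith [hδ m]
  have key : ∀ i j, i < j → v i = v j → False := by
    intro i j hij h
    have h1 := (hvK i).1
    have h2 := (hvK j).2
    have h3 : 1 / s j ≤ 1 / s (i + 1) :=
      one_div_le_one_div_of_le (hspos _) (hsmono.monotone hij)
    have h4 : v i = 1 / s (i + 1) := by linarith
    apply hne (i + 1)
    have := hv (s (i + 1))
    rw [this, prod_zero_iff v (hb.of_nonneg_of_le hv0 hvb)]
    refine ⟨i, ?_⟩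
    rw [h4]
    have := (hspos (i + 1)).ne'
    exact_mod_cast mul_one_div_cancel this
  intro i j hij h
  rcases lt_or_gt_of_ne hij with h' | h'
  · exact (key i j h' h).elim
  · exact (key j i h' h.symm).elim


lemma double_zero (f : ℂ → ℂ) (v : ℕ → ℝ) (hs : Summable v)
    (hf : ∀ t : ℂ, f t = ∏' j, (1 - t * (v j : ℂ))) (i j : ℕ) (hij : i ≠ j) (h : v i = v j)
    (h0 : v i ≠ 0) : HasDerivAt f 0 ((1 / v i : ℝ) : ℂ) := by
  classical
  set w := v i with hw
  set v' : ℕ → ℝ := fun k => if k = i ∨ k = j then 0 else v k with hv'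
  have hle : ∀ k, ‖v' k‖ ≤ ‖v k‖ := by
    intro k
    simp only [hv']
    split_ifs <;> simp
  have hs' : Summable fun k => ‖v' k‖ := hs.norm.of_nonneg_of_le (fun _ => norm_nonneg _) hle
  set g : ℂ → ℂ := fun t => ∏' k, (1 + -(t * (v' k : ℂ))) with hg
  have hfg : ∀ t : ℂ, f t = (1 - t * (w : ℂ)) ^ 2 * g t := by
    intro t
    have e1 : ∀ k, 1 - t * (v k : ℂ) = (if k ∈ ({i, j} : Finset ℕ) then (1 - t * (w : ℂ)) else 1) *
        (1 + -(t * (v' k : ℂ))) := by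
      intro k
      simp only [hv', Finset.mem_insert, Finset.mem_singleton]
      split_ifs with hk
      · rcases hk with hk | hk
        · simp [hk, hw]
        · simp [hk, ← h]
      · ring
    have m1 : Multipliable fun k : ℕ =>
        (if k ∈ ({i, j} : Finset ℕ) then (1 - t * (w : ℂ)) else 1) := by
      apply multipliable_of_ne_finset_one (s := {i, j})
      intro k hk
      rw [if_neg hk]
    have m2 : Multipliable fun k : ℕ => (1 + -(t * (v' k : ℂ))) := by
      apply multipliable_one_add_of_summable
      simp only [norm_neg, norm_mul, Complex.norm_real]
      exact hs'.mul_left _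
    rw [hf, tprod_congr e1, m1.tprod_mul m2, tprod_eq_prod (s := {i, j})]
    · rw [Finset.prod_pair hij]
      simp [pow_two, hg]
    · intro k hk
      rw [if_neg hk]
  have hgc : ContinuousAt g ((1 / w : ℝ) : ℂ) := by
    set t0 : ℂ := ((1 / w : ℝ) : ℂ)
    refine tendsto_tprod_one_add_of_dominated_convergence
      (bound := fun k => (‖t0‖ + 1) * ‖v' k‖) (hs'.mul_left _) ?_ ?_
    · intro k
      have : Continuous fun t : ℂ => -(t * (v' k : ℂ)) := by fun_prop
      exact this.tendsto t0
    · have : ∀ᶠ t in 𝓝 t0, ‖t‖ < ‖t0‖ + 1 :=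
        continuous_norm.continuousAt.eventually_lt continuousAt_const (by simp)
      filter_upwards [this] with t ht k
      rw [norm_neg, norm_mul, Complex.norm_real]
      gcongr
  have hwc : (w : ℂ) ≠ 0 := by exact_mod_cast h0
  have hA : HasDerivAt (fun t : ℂ => (1 - t * (w : ℂ)) ^ 2) 0 ((1 / w : ℝ) : ℂ) := by
    have := (((hasDerivAt_id ((1 / w : ℝ) : ℂ)).mul_const (w : ℂ)).const_sub 1).pow 2
    convert! this using 1
    simp [hwc]
  have hA0 : (1 - ((1 / w : ℝ) : ℂ) * (w : ℂ)) = 0 := by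
    push_cast; field_simp; simp
  rw [hasDerivAt_iff_tendsto_slope]
  have e2 : ∀ t ≠ ((1 / w : ℝ) : ℂ), slope f ((1 / w : ℝ) : ℂ) t =
      slope (fun t : ℂ => (1 - t * (w : ℂ)) ^ 2) ((1 / w : ℝ) : ℂ) t * g t := by
    intro t _
    rw [slope_def_field, slope_def_field, hfg, hfg, hA0]
    ring
  have e3 := (hasDerivAt_iff_tendsto_slope.1 hA).mul (hgc.tendsto.mono_left
    (nhdsWithin_le_nhds (s := {((1 / w : ℝ) : ℂ)}ᶜ)))
  rw [zero_mul] at e3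
  refine e3.congr' ?_
  filter_upwards [self_mem_nhdsWithin] with t ht
  exact (e2 t ht).symm

open Polynomial in
lemma coeff_prod_bound (u : ℕ → ℝ) (hu : ∀ j, 0 ≤ u j) (L : ℕ) : ∀ m,
    0 ≤ (-1) ^ m * (∏ j ∈ Finset.range L, (1 - C (u j) * X)).coeff m ∧
    (m ≤ L → ∏ i ∈ Finset.range m, u i ≤
      (-1) ^ m * (∏ j ∈ Finset.range L, (1 - C (u j) * X)).coeff m) := by
  induction L with
  | zero =>
    intro m
    rcases m with _ | m
    · simp
    · simp [coeff_one]
  | succ L ih =>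
    intro m
    rw [Finset.prod_range_succ]
    set Q := ∏ j ∈ Finset.range L, (1 - C (u j) * X)
    rcases m with _ | m
    · have := ih 0
      simp at this
      simpa [mul_sub, ← mul_assoc] using this
    · have e : (-1) ^ (m + 1) * (Q * (1 - C (u L) * X)).coeff (m + 1) =
          (-1) ^ (m + 1) * Q.coeff (m + 1) + u L * ((-1) ^ m * Q.coeff m) := by
        have : Q * (1 - C (u L) * X) = Q - C (u L) * (Q * X) := by ring
        rw [this, coeff_sub, coeff_C_mul, coeff_mul_X]
        ring
      rw [e]
      have h1 := ih (m + 1)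
      have h2 := ih m
      have h3 := mul_nonneg (hu L) h2.1
      refine ⟨by linarith [h1.1], fun hm => ?_⟩
      rcases Nat.lt_or_ge m L with h | h
      · linarith [h1.2 h]
      · obtain rfl : m = L := by omega
        rw [Finset.prod_range_succ]
        nlinarith [h1.1, mul_le_mul_of_nonneg_left (h2.2 le_rfl) (hu m)]

open Polynomial in
lemma realrooted_multiset (n : ℕ) : ∀ P : ℝ[X], P.natDegree ≤ n → P.coeff 0 = 1 →
    (∀ t : ℂ, aeval t P = 0 → ∃ x : ℝ, 0 < x ∧ t = x) →
    ∃ M : Multiset ℝ, (∀ x ∈ M, 0 ≤ x) ∧ P = (M.map fun x => 1 - C x * X).prod := by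
  induction n with
  | zero =>
    intro P hP h0 _
    refine ⟨0, by simp, ?_⟩
    rw [eq_C_of_natDegree_le_zero hP, h0]; simp
  | succ n ih =>
    intro P hP h0 hr
    by_cases hd : P.natDegree ≤ n
    · exact ih P hd h0 hr
    have hdeg : P.natDegree = n + 1 := by omega
    have hne : P ≠ 0 := by rintro rfl; simp at h0
    obtain ⟨t, ht⟩ := IsAlgClosed.exists_aeval_eq_zero ℂ P
      (by rw [degree_eq_natDegree hne, hdeg]; exact_mod_cast Nat.succ_ne_zero n)
    obtain ⟨x, hx, rfl⟩ := hr t ht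
    have hroot : P.IsRoot x := by
      have : ((P.eval x : ℝ) : ℂ) = 0 := by
        rw [← ht]
        exact (aeval_algebraMap_apply_eq_algebraMap_eval x P).symm
      exact_mod_cast this
    obtain ⟨Q, hQ⟩ := dvd_iff_isRoot.2 hroot
    have hPQ : P = (1 - C (1 / x) * X) * (C (-x) * Q) := by
      rw [hQ]
      have : (X - C x) = (1 - C (1 / x) * X) * C (-x) := by
        have : C (1 / x) * C x = 1 := by rw [← C_mul, one_div_mul_cancel hx.ne', C_1]
        rw [C_neg]
        linear_combination (-X : ℝ[X]) * this
      rw [this]; ring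
    have hQ0 : Q ≠ 0 := by rintro rfl; simp at hQ; exact hne hQ
    obtain ⟨M, hM, hMQ⟩ := ih (C (-x) * Q)
      (by
        have h1 : P.natDegree = 1 + Q.natDegree := by
          rw [hQ, natDegree_mul (X_sub_C_ne_zero x) hQ0, natDegree_X_sub_C]
        refine natDegree_C_mul_le _ _ |>.trans ?_
        omega)
      (by
        have := h0
        rw [hPQ, mul_coeff_zero] at this
        simpa using this)
      (by
        intro t ht
        apply hr
        rw [hPQ, map_mul, ht, mul_zero])
    refine ⟨(1 / x) ::ₘ M, ?_, ?_⟩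
    · intro y hy
      rcases Multiset.mem_cons.1 hy with rfl | h
      · positivity
      · exact hM y h
    · rw [Multiset.map_cons, Multiset.prod_cons, ← hMQ]
      exact hPQ

open Polynomial in
lemma realrooted_seq (P : ℝ[X]) (h0 : P.coeff 0 = 1)
    (hr : ∀ t : ℂ, aeval t P = 0 → ∃ x : ℝ, 0 < x ∧ t = x) (b : ℕ → ℝ) (hb : ∀ j, 0 ≤ b j)
    (hP : ∀ m, |P.coeff (m + 1)| ≤ b m ^ (m + 1)) :
    ∃ u : ℕ → ℝ, (∀ j, 0 ≤ u j) ∧ (∀ j, u j ≤ b j) ∧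
      ∀ t : ℂ, aeval t P = ∏' j, (1 - t * (u j : ℂ)) := by
  obtain ⟨M, hM, hPM⟩ := realrooted_multiset P.natDegree P le_rfl h0 hr
  set l := M.sort (· ≥ ·) with hl
  have hlM : (l : Multiset ℝ) = M := Multiset.sort_eq _ _
  have hsort : l.Pairwise (· ≥ ·) := Multiset.pairwise_sort _ _
  set u : ℕ → ℝ := fun j => l.getD j 0 with hu
  have hu0 : ∀ j, 0 ≤ u j := by
    intro j
    simp only [hu]
    rcases Nat.lt_or_ge j l.length with h | h
    · rw [List.getD_eq_getElem _ _ h]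
      apply hM
      rw [← hlM]
      exact Multiset.mem_coe.2 (List.getElem_mem h)
    · rw [List.getD_eq_default _ _ h]
  have hanti : ∀ i j, i ≤ j → u j ≤ u i := by
    intro i j hij
    rcases Nat.lt_or_ge j l.length with h | h
    · rcases Nat.eq_or_lt_of_le hij with rfl | hij
      · exact le_rfl
      simp only [hu]
      rw [List.getD_eq_getElem _ _ h, List.getD_eq_getElem _ _ (hij.trans h)]
      exact List.pairwise_iff_getElem.1 hsort i j _ _ hij
    · have : u j = 0 := by simp only [hu]; rw [List.getD_eq_default _ _ h]
      rw [this]; exact hu0 i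
  have hprod : P = ∏ j ∈ Finset.range l.length, (1 - C (u j) * X) := by
    conv_lhs => rw [hPM, ← hlM]
    rw [Multiset.map_coe, Multiset.prod_coe, ← Fin.prod_univ_eq_prod_range
      (fun j => (1 - C (u j) * X)), ← List.prod_ofFn]
    congr 1
    apply List.ext_getElem
    · simp
    · intro i h1 h2
      simp [hu]
  refine ⟨u, hu0, fun j => ?_, fun t => ?_⟩
  · rcases Nat.lt_or_ge j l.length with h | h
    · have h1 := (coeff_prod_bound u hu0 l.length (j + 1)).2 h
      rw [← hprod] at h1
      have h2 : u j ^ (j + 1) ≤ ∏ i ∈ Finset.range (j + 1), u i := by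
        rw [← Finset.card_range (j + 1), ← Finset.prod_const, Finset.card_range]
        refine Finset.prod_le_prod (fun _ _ => hu0 _) fun i hi => ?_
        exact hanti i j (by simpa [Nat.lt_succ_iff] using hi)
      have h3 : (-1) ^ (j + 1) * P.coeff (j + 1) ≤ |P.coeff (j + 1)| := by
        refine (le_abs_self _).trans ?_
        simp [abs_mul]
      exact le_of_pow_le_pow_left₀ (Nat.succ_ne_zero j) (hb j)
        (h2.trans (h1.trans (h3.trans (hP j))))
    · have : u j = 0 := by simp only [hu]; rw [List.getD_eq_default _ _ h]
      rw [this]; exact hb j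
  · rw [tprod_eq_prod (s := Finset.range l.length)]
    · conv_lhs => rw [hprod]
      simp [map_prod, mul_comm t]
    · intro j hj
      have : u j = 0 := by
        simp only [hu]; rw [List.getD_eq_default _ _ (by simpa using hj)]
      simp [this]


open Polynomial in
noncomputable def qPS (q : ℝ) : ℕ → ℝ[X] × ℝ[X]
  | 0 => (1, 1)
  | N + 1 =>
    let p := (qPS q N).1.comp (C (q ^ 2) * X) - X * (qPS q N).2.comp (C (q ^ 2) * X)
    (p, C q * (qPS q N).2.comp (C (q ^ 2) * X) + p)

open Polynomial in
lemma qPS_aeval_fst (q : ℝ) (N : ℕ) (t : ℂ) : aeval t (qPS q (N + 1)).1 =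
    aeval ((q : ℂ) ^ 2 * t) (qPS q N).1 - t * aeval ((q : ℂ) ^ 2 * t) (qPS q N).2 := by
  simp [qPS, aeval_comp]

open Polynomial in
lemma qPS_aeval_snd (q : ℝ) (N : ℕ) (t : ℂ) : aeval t (qPS q (N + 1)).2 =
    (q : ℂ) * aeval ((q : ℂ) ^ 2 * t) (qPS q N).2 + aeval t (qPS q (N + 1)).1 := by
  simp [qPS, aeval_comp]

open Polynomial in
lemma qPS_im (q : ℝ) (hq0 : 0 < q) (N : ℕ) : ∀ t : ℂ, t.im ≠ 0 →
    t.im * (aeval t (qPS q (N + 1)).1 * (starRingEnd ℂ) (aeval t (qPS q (N + 1)).2)).im < 0 := by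
  have key : ∀ (p s t : ℂ), t.im * ((p - t * s) * (starRingEnd ℂ) ((q : ℂ) * s + (p - t * s))).im =
      q * (t.im * (p * (starRingEnd ℂ) s).im) - q * t.im ^ 2 * Complex.normSq s := by
    intro p s t
    simp [Complex.normSq_apply]
    ring
  induction N with
  | zero =>
    intro t ht
    rw [qPS_aeval_snd, qPS_aeval_fst, key]
    simp [qPS]
    positivity
  | succ N ih =>
    intro t ht
    rw [qPS_aeval_snd, qPS_aeval_fst, key]
    have him : ((q : ℂ) ^ 2 * t).im = q ^ 2 * t.im := by
      rw [← Complex.ofReal_pow, Complex.im_ofReal_mul]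
    have h1 := ih ((q : ℂ) ^ 2 * t) (by rw [him]; positivity)
    rw [him, mul_assoc] at h1
    have h2 := neg_of_mul_neg_right h1 (by positivity)
    have h3 : 0 ≤ q * t.im ^ 2 * Complex.normSq (aeval ((q : ℂ) ^ 2 * t) (qPS q (N + 1)).2) :=
      mul_nonneg (by positivity) (Complex.normSq_nonneg _)
    nlinarith

open Polynomial in
lemma qPS_neg (q : ℝ) (hq0 : 0 < q) (N : ℕ) : ∀ x : ℝ, x ≤ 0 →
    0 < (qPS q N).1.eval x ∧ 0 < (qPS q N).2.eval x := by
  induction N with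
  | zero => intro x _; simp [qPS]
  | succ N ih =>
    intro x hx
    have h1 := ih (q ^ 2 * x) (mul_nonpos_of_nonneg_of_nonpos (sq_nonneg q) hx)
    have h2 : 0 ≤ -x * (qPS q N).2.eval (q ^ 2 * x) := mul_nonneg (by linarith) h1.2.le
    have h3 := mul_pos hq0 h1.2
    simp only [qPS, eval_add, eval_sub, eval_mul, eval_comp, eval_C, eval_X]
    constructor <;> nlinarith [h1.1]

open Polynomial in
lemma qPS_roots (q : ℝ) (hq0 : 0 < q) (N : ℕ) (t : ℂ)
    (h : aeval t (qPS q (N + 1)).1 = 0 ∨ aeval t (qPS q (N + 1)).2 = 0) :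
    ∃ x : ℝ, 0 < x ∧ t = x := by
  have him : t.im = 0 := by
    by_contra hne
    have := qPS_im q hq0 N t hne
    rcases h with h | h <;> simp [h] at this
  obtain ⟨x, rfl⟩ : ∃ x : ℝ, t = x := ⟨t.re, Complex.ext (by simp) (by simp [him])⟩
  refine ⟨x, ?_, rfl⟩
  by_contra! hx
  have h1 := qPS_neg q hq0 (N + 1) x hx
  have e : ∀ P : ℝ[X], aeval (x : ℂ) P = ((P.eval x : ℝ) : ℂ) := fun P =>
    aeval_algebraMap_apply_eq_algebraMap_eval x P
  rw [e, e] at h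
  rcases h with h | h
  · exact h1.1.ne' (by exact_mod_cast h)
  · exact h1.2.ne' (by exact_mod_cast h)

/-- signed coefficients -/
noncomputable def qPa (q : ℝ) (N n : ℕ) : ℝ := (-1) ^ n * (qPS q N).1.coeff n
noncomputable def qPb (q : ℝ) (N n : ℕ) : ℝ := (-1) ^ n * (qPS q N).2.coeff n

lemma qPa_zero (q : ℝ) (N : ℕ) : qPa q (N + 1) 0 = qPa q N 0 := by
  simp only [qPa, qPS, Polynomial.coeff_sub, Polynomial.mul_coeff_zero, Polynomial.coeff_X_zero,
    Polynomial.comp_C_mul_X_coeff]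
  ring

lemma qPa_succ (q : ℝ) (N n : ℕ) :
    qPa q (N + 1) (n + 1) = (q ^ 2) ^ (n + 1) * qPa q N (n + 1) + (q ^ 2) ^ n * qPb q N n := by
  simp only [qPa, qPb, qPS, Polynomial.coeff_sub, Polynomial.coeff_X_mul,
    Polynomial.comp_C_mul_X_coeff]
  ring

lemma qPb_succ (q : ℝ) (N n : ℕ) :
    qPb q (N + 1) n = q * (q ^ 2) ^ n * qPb q N n + qPa q (N + 1) n := by
  simp only [qPa, qPb, qPS, Polynomial.coeff_add, Polynomial.coeff_C_mul,
    Polynomial.comp_C_mul_X_coeff]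
  ring

lemma qPa_init (q : ℝ) (n : ℕ) : qPa q 0 n = if n = 0 then 1 else 0 := by
  rcases n with _ | n <;> simp [qPa, qPS, Polynomial.coeff_one]

lemma qPb_init (q : ℝ) (n : ℕ) : qPb q 0 n = if n = 0 then 1 else 0 := by
  rcases n with _ | n <;> simp [qPb, qPS, Polynomial.coeff_one]

lemma qPa_zero' (q : ℝ) (N : ℕ) : qPa q N 0 = 1 := by
  induction N with
  | zero => simp [qPa_init]
  | succ N ih => rw [qPa_zero, ih]

lemma qP_nonneg (q : ℝ) (hq0 : 0 < q) (N : ℕ) : ∀ n, 0 ≤ qPa q N n ∧ 0 ≤ qPb q N n := by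
  induction N with
  | zero => intro n; rw [qPa_init, qPb_init]; split_ifs <;> simp
  | succ N ih =>
    intro n
    have ha : 0 ≤ qPa q (N + 1) n := by
      rcases n with _ | n
      · rw [qPa_zero']; norm_num
      · rw [qPa_succ]
        have := (ih (n + 1)).1
        have := (ih n).2
        positivity
    refine ⟨ha, ?_⟩
    rw [qPb_succ]
    have := (ih n).2
    positivity

lemma qP_mono (q : ℝ) (hq0 : 0 < q) (N : ℕ) :
    ∀ n, qPa q N n ≤ qPa q (N + 1) n ∧ qPb q N n ≤ qPb q (N + 1) n := by
  induction N with
  | zero =>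
    intro n
    rcases n with _ | n
    · refine ⟨by rw [qPa_zero], ?_⟩
      rw [qPb_succ, qPa_zero', qPb_init]; simp [hq0.le]
    · have := qP_nonneg q hq0 1 (n + 1)
      rw [qPa_init, qPb_init]; simpa using this
  | succ N ih =>
    intro n
    have ha : qPa q (N + 1) n ≤ qPa q (N + 1 + 1) n := by
      rcases n with _ | n
      · rw [qPa_zero', qPa_zero']
      · rw [qPa_succ, qPa_succ q (N + 1)]
        have := (ih (n + 1)).1
        have := (ih n).2
        gcongr
    refine ⟨ha, ?_⟩
    rw [qPb_succ, qPb_succ q (N + 1)]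
    have := (ih n).2
    gcongr

structure QAB (q : ℝ) (A B : ℕ → ℝ) : Prop where
  hq0 : 0 < q
  hq1 : q < 1
  hA0 : A 0 = 1
  hA : ∀ n, A (n + 1) * (1 - (q ^ 2) ^ (n + 1)) = (q ^ 2) ^ n * B n
  hB : ∀ n, B n * (1 - q * (q ^ 2) ^ n) = A n

lemma q_aux (q : ℝ) (hq0 : 0 < q) (hq1 : q < 1) (n : ℕ) :
    (q ^ 2) ^ (n + 1) ≤ q ∧ q * (q ^ 2) ^ n ≤ q := by
  have h2 : q ^ 2 ≤ 1 := by nlinarith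
  have h3 : (q ^ 2) ^ n ≤ 1 := pow_le_one₀ (sq_nonneg q) h2
  have h4 : 0 ≤ (q ^ 2) ^ n := by positivity
  constructor
  · rw [pow_succ]; nlinarith
  · nlinarith

lemma QAB.pos {q : ℝ} {A B : ℕ → ℝ} (H : QAB q A B) (n : ℕ) : 0 < A n ∧ 0 < B n := by
  have hq0 := H.hq0
  have hq1 := H.hq1
  have hb : ∀ n, 0 < A n → 0 < B n := by
    intro n h
    have := H.hB n
    have h1 := (q_aux q hq0 hq1 n).2
    by_contra! hneg
    nlinarith
  induction n with
  | zero => exact ⟨by rw [H.hA0]; norm_num, hb 0 (by rw [H.hA0]; norm_num)⟩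
  | succ n ih =>
    have : 0 < A (n + 1) := by
      have h0 := H.hA n
      have h1 := (q_aux q hq0 hq1 n).1
      have h2 : 0 < (q ^ 2) ^ n * B n := mul_pos (by positivity) ih.2
      by_contra! hneg
      nlinarith
    exact ⟨this, hb _ this⟩

lemma QAB.step {q : ℝ} {A B : ℕ → ℝ} (H : QAB q A B) (n : ℕ) :
    A (n + 1) ≤ (1 / (1 - q)) * ((q ^ 2) ^ n * B n) ∧ B n ≤ (1 / (1 - q)) * A n := by
  have hk : 0 < 1 - q := by linarith [H.hq1]
  have h1 := q_aux q H.hq0 H.hq1 n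
  constructor
  · rw [one_div, inv_mul_eq_div, le_div_iff₀ hk, ← H.hA n]
    exact mul_le_mul_of_nonneg_left (by linarith [h1.1]) (H.pos _).1.le
  · rw [one_div, inv_mul_eq_div, le_div_iff₀ hk]
    conv_rhs => rw [← H.hB n]
    exact mul_le_mul_of_nonneg_left (by linarith [h1.2]) (H.pos _).2.le

lemma QAB.bound {q : ℝ} {A B : ℕ → ℝ} (H : QAB q A B) (n : ℕ) :
    A n ≤ q ^ (n * (n - 1)) * (1 / (1 - q)) ^ (2 * n) ∧
    B n ≤ q ^ (n * (n - 1)) * (1 / (1 - q)) ^ (2 * n + 1) := by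
  have hq0 := H.hq0
  have hk : 0 < 1 / (1 - q) := one_div_pos.2 (by linarith [H.hq1])
  set k := 1 / (1 - q)
  have hb : ∀ n, A n ≤ q ^ (n * (n - 1)) * k ^ (2 * n) →
      B n ≤ q ^ (n * (n - 1)) * k ^ (2 * n + 1) := by
    intro n h
    refine (H.step n).2.trans ?_
    calc k * A n ≤ k * (q ^ (n * (n - 1)) * k ^ (2 * n)) := by gcongr
      _ = _ := by ring
  induction n with
  | zero => 
    have : A 0 ≤ q ^ (0 * (0 - 1)) * k ^ (2 * 0) := by simp [H.hA0]
    exact ⟨this, hb 0 this⟩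
  | succ n ih =>
    have : A (n + 1) ≤ q ^ ((n + 1) * (n + 1 - 1)) * k ^ (2 * (n + 1)) := by
      refine (H.step n).1.trans ?_
      calc k * ((q ^ 2) ^ n * B n)
          ≤ k * ((q ^ 2) ^ n * (q ^ (n * (n - 1)) * k ^ (2 * n + 1))) := by
            have := ih.2
            gcongr
        _ = q ^ (2 * n + n * (n - 1)) * k ^ (2 * (n + 1)) := by
            rw [← pow_mul, pow_add]; ring
        _ = _ := by
            congr 2
            rcases n with _ | n
            · simp
            · simp only [Nat.add_sub_cancel]; ring
    exact ⟨this, hb _ this⟩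

lemma QAB.bound' {q : ℝ} {A B : ℕ → ℝ} (H : QAB q A B) (m : ℕ) :
    A (m + 1) ≤ ((1 / (1 - q)) ^ 3 * q ^ m) ^ (m + 1) ∧
    B (m + 1) ≤ ((1 / (1 - q)) ^ 3 * q ^ m) ^ (m + 1) := by
  have hq0 := H.hq0
  have hk : 1 ≤ 1 / (1 - q) := by
    rw [le_div_iff₀ (by linarith [H.hq1])]; linarith
  have h := H.bound (m + 1)
  set k := 1 / (1 - q)
  have e : (k ^ 3 * q ^ m) ^ (m + 1) = q ^ ((m + 1) * (m + 1 - 1)) * k ^ (3 * (m + 1)) := by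
    rw [mul_pow, ← pow_mul, ← pow_mul, Nat.add_sub_cancel, mul_comm (m + 1) m]; ring
  rw [e]
  refine ⟨h.1.trans ?_, h.2.trans ?_⟩
  · gcongr
    norm_num
  · gcongr
    omega

lemma QAB.summable {q : ℝ} {A B : ℕ → ℝ} (H : QAB q A B) (x : ℝ) (hx : 0 ≤ x) :
    (Summable fun n => A n * x ^ n) ∧ Summable fun n => B n * x ^ n := by
  have hq0 := H.hq0
  have hk : 0 < 1 / (1 - q) := one_div_pos.2 (by linarith [H.hq1])
  have hA : Summable fun n => A n * x ^ n := by
    refine summable_of_ratio_norm_eventually_le (r := 1 / 2) (by norm_num) ?_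
    have h1 : Tendsto (fun n : ℕ => (1 / (1 - q)) ^ 2 * x * (q ^ 2) ^ n) atTop (𝓝 0) := by
      have := (tendsto_pow_atTop_nhds_zero_of_lt_one (sq_nonneg q)
        (by nlinarith [H.hq1])).const_mul ((1 / (1 - q)) ^ 2 * x)
      simpa using this
    filter_upwards [h1.eventually_le_const (show (0 : ℝ) < 1 / 2 by norm_num)] with n hn
    rw [Real.norm_of_nonneg (mul_nonneg (H.pos _).1.le (by positivity)),
      Real.norm_of_nonneg (mul_nonneg (H.pos _).1.le (by positivity)), pow_succ]
    have h2 : A (n + 1) ≤ (1 / (1 - q)) ^ 2 * (q ^ 2) ^ n * A n := by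
      refine (H.step n).1.trans ?_
      calc 1 / (1 - q) * ((q ^ 2) ^ n * B n)
          ≤ 1 / (1 - q) * ((q ^ 2) ^ n * (1 / (1 - q) * A n)) := by
            have := (H.step n).2
            gcongr
        _ = _ := by ring
    calc A (n + 1) * (x ^ n * x) ≤ ((1 / (1 - q)) ^ 2 * (q ^ 2) ^ n * A n) * (x ^ n * x) := by
          gcongr
      _ = ((1 / (1 - q)) ^ 2 * x * (q ^ 2) ^ n) * (A n * x ^ n) := by ring
      _ ≤ 1 / 2 * (A n * x ^ n) := by
          have := (H.pos n).1
          gcongr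
  refine ⟨hA, ?_⟩
  refine (hA.mul_left (1 / (1 - q))).of_nonneg_of_le
    (fun n => mul_nonneg (H.pos _).2.le (by positivity)) fun n => ?_
  have := (H.step n).2
  calc B n * x ^ n ≤ (1 / (1 - q) * A n) * x ^ n := by gcongr
    _ = _ := by ring

lemma QAB.le {q : ℝ} {A B : ℕ → ℝ} (H : QAB q A B) (N : ℕ) :
    ∀ n, qPa q N n ≤ A n ∧ qPb q N n ≤ B n := by
  have hq0 := H.hq0
  induction N with
  | zero =>
    intro n
    rw [qPa_init, qPb_init]
    rcases n with _ | n
    · have h1 := H.hB 0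
      rw [H.hA0] at h1
      have := (H.pos 0).2
      refine ⟨by simp [H.hA0], ?_⟩
      simp at h1 ⊢
      nlinarith
    · simpa using ⟨(H.pos (n + 1)).1.le, (H.pos (n + 1)).2.le⟩
  | succ N ih =>
    intro n
    have ha : qPa q (N + 1) n ≤ A n := by
      rcases n with _ | n
      · rw [qPa_zero', H.hA0]
      · rw [qPa_succ]
        have h1 := (ih (n + 1)).1
        have h2 := (ih n).2
        calc _ ≤ (q ^ 2) ^ (n + 1) * A (n + 1) + (q ^ 2) ^ n * B n := by gcongr
          _ = A (n + 1) := by rw [← H.hA n]; ring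
    refine ⟨ha, ?_⟩
    rw [qPb_succ]
    have h2 := (ih n).2
    calc _ ≤ q * (q ^ 2) ^ n * B n + A n := by gcongr
      _ = B n := by rw [← H.hB n]; ring

lemma QAB.tendsto {q : ℝ} {A B : ℕ → ℝ} (H : QAB q A B) (n : ℕ) :
    Tendsto (fun N => qPa q N n) atTop (𝓝 (A n)) ∧
    Tendsto (fun N => qPb q N n) atTop (𝓝 (B n)) := by
  have hq0 := H.hq0
  have exa : ∀ n, ∃ l, Tendsto (fun N => qPa q N n) atTop (𝓝 l) := fun n =>
    ⟨_, tendsto_atTop_ciSup (monotone_nat_of_le_succ fun N => (qP_mono q hq0 N n).1)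
      ⟨A n, by rintro _ ⟨N, rfl⟩; exact (H.le N n).1⟩⟩
  have exb : ∀ n, ∃ l, Tendsto (fun N => qPb q N n) atTop (𝓝 l) := fun n =>
    ⟨_, tendsto_atTop_ciSup (monotone_nat_of_le_succ fun N => (qP_mono q hq0 N n).2)
      ⟨B n, by rintro _ ⟨N, rfl⟩; exact (H.le N n).2⟩⟩
  have hb : ∀ n, Tendsto (fun N => qPa q N n) atTop (𝓝 (A n)) →
      Tendsto (fun N => qPb q N n) atTop (𝓝 (B n)) := by
    intro n h
    obtain ⟨l, hl⟩ := exb n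
    have h1 := (hl.const_mul (q * (q ^ 2) ^ n)).add ((tendsto_add_atTop_iff_nat 1).2 h)
    have h2 := (tendsto_add_atTop_iff_nat 1).2 hl
    have h3 := tendsto_nhds_unique h2 (h1.congr fun N => (qPb_succ q N n).symm)
    have h4 := H.hB n
    have h5 := (q_aux q hq0 H.hq1 n).2
    have : l = B n := by
      have h6 : (1 - q * (q ^ 2) ^ n) ≠ 0 := by linarith [H.hq1]
      apply mul_right_cancel₀ h6
      linarith
    rwa [this] at hl
  induction n with
  | zero =>
    have : Tendsto (fun N => qPa q N 0) atTop (𝓝 (A 0)) := by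
      simp only [qPa_zero', H.hA0]; exact tendsto_const_nhds
    exact ⟨this, hb 0 this⟩
  | succ n ih =>
    have : Tendsto (fun N => qPa q N (n + 1)) atTop (𝓝 (A (n + 1))) := by
      obtain ⟨l, hl⟩ := exa (n + 1)
      have h1 := (hl.const_mul ((q ^ 2) ^ (n + 1))).add (ih.2.const_mul ((q ^ 2) ^ n))
      have h2 := (tendsto_add_atTop_iff_nat 1).2 hl
      have h3 := tendsto_nhds_unique h2 (h1.congr fun N => (qPa_succ q N n).symm)
      have h4 := H.hA n
      have h5 := (q_aux q hq0 H.hq1 n).1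
      have : l = A (n + 1) := by
        have h6 : (1 - (q ^ 2) ^ (n + 1)) ≠ 0 := by linarith [H.hq1]
        apply mul_right_cancel₀ h6
        linarith
      rwa [this] at hl
    exact ⟨this, hb _ this⟩

noncomputable def altS (A : ℕ → ℝ) (t : ℂ) : ℂ := ∑' n, (((-1) ^ n * A n : ℝ) : ℂ) * t ^ n

lemma aeval_tendsto_altS (P : ℕ → Polynomial ℝ) (A : ℕ → ℝ)
    (hs : ∀ x : ℝ, 0 ≤ x → Summable fun n => A n * x ^ n)
    (h0 : ∀ N n, 0 ≤ (-1) ^ n * (P N).coeff n)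
    (hle : ∀ N n, (-1) ^ n * (P N).coeff n ≤ A n)
    (ht : ∀ n, Tendsto (fun N => (-1) ^ n * (P N).coeff n) atTop (𝓝 (A n))) (t : ℂ) :
    Tendsto (fun N => Polynomial.aeval t (P N)) atTop (𝓝 (altS A t)) := by
  have e : ∀ N, Polynomial.aeval t (P N) =
      ∑' n, (((-1) ^ n * ((-1) ^ n * (P N).coeff n) : ℝ) : ℂ) * t ^ n := by
    intro N
    have e1 : ∀ n, (-1 : ℝ) ^ n * ((-1) ^ n * (P N).coeff n) = (P N).coeff n := by
      intro n
      rw [← mul_assoc, ← mul_pow]; simp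
    simp only [e1]
    rw [Polynomial.aeval_eq_sum_range, tsum_eq_sum (s := Finset.range ((P N).natDegree + 1))]
    · simp
    · intro n hn
      rw [Polynomial.coeff_eq_zero_of_natDegree_lt (by simpa [Nat.lt_succ_iff] using hn)]
      simp
  simp only [e]
  refine tendsto_tsum_of_dominated_convergence (bound := fun n => A n * ‖t‖ ^ n)
    (hs ‖t‖ (norm_nonneg t)) ?_ ?_
  · intro n
    have := (Complex.continuous_ofReal.tendsto _).comp ((ht n).const_mul ((-1) ^ n))
    exact this.mul_const _
  · refine Eventually.of_forall fun N n => ?_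
    rw [norm_mul, norm_pow, Complex.norm_real, norm_mul, norm_pow, norm_neg, norm_one, one_pow,
      one_mul, Real.norm_of_nonneg (h0 N n)]
    have := hle N n
    gcongr

lemma QAB.tendstoC {q : ℝ} {A B : ℕ → ℝ} (H : QAB q A B) (t : ℂ) :
    Tendsto (fun N => Polynomial.aeval t (qPS q N).1) atTop (𝓝 (altS A t)) ∧
    Tendsto (fun N => Polynomial.aeval t (qPS q N).2) atTop (𝓝 (altS B t)) :=
  ⟨aeval_tendsto_altS _ A (fun x hx => (H.summable x hx).1) (fun N n => (qP_nonneg q H.hq0 N n).1)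
    (fun N n => (H.le N n).1) (fun n => (H.tendsto n).1) t,
  aeval_tendsto_altS _ B (fun x hx => (H.summable x hx).2) (fun N n => (qP_nonneg q H.hq0 N n).2)
    (fun N n => (H.le N n).2) (fun n => (H.tendsto n).2) t⟩

lemma QAB.feq1 {q : ℝ} {A B : ℕ → ℝ} (H : QAB q A B) (t : ℂ) :
    altS A t = altS A ((q : ℂ) ^ 2 * t) - t * altS B ((q : ℂ) ^ 2 * t) := by
  have h1 := (tendsto_add_atTop_iff_nat 1).2 (H.tendstoC t).1
  have h2 := (H.tendstoC ((q : ℂ) ^ 2 * t)).1.sub ((H.tendstoC ((q : ℂ) ^ 2 * t)).2.const_mul t)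
  exact tendsto_nhds_unique h1 (h2.congr fun N => (qPS_aeval_fst q N t).symm)

lemma QAB.feq2 {q : ℝ} {A B : ℕ → ℝ} (H : QAB q A B) (t : ℂ) :
    altS B t = (q : ℂ) * altS B ((q : ℂ) ^ 2 * t) + altS A t := by
  have h1 := (tendsto_add_atTop_iff_nat 1).2 (H.tendstoC t).2
  have h2 := ((H.tendstoC ((q : ℂ) ^ 2 * t)).2.const_mul (q : ℂ)).add
    ((tendsto_add_atTop_iff_nat 1).2 (H.tendstoC t).1)
  exact tendsto_nhds_unique h1 (h2.congr fun N => (qPS_aeval_snd q N t).symm)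

lemma altS_diff (A : ℕ → ℝ) (hA : ∀ n, 0 ≤ A n)
    (hs : ∀ x : ℝ, 0 ≤ x → Summable fun n => A n * x ^ n) : Differentiable ℂ (altS A) := by
  intro t
  have h := Complex.differentiableOn_tsum_of_summable_norm (U := Metric.ball (0 : ℂ) (‖t‖ + 1))
    (F := fun n (z : ℂ) => (((-1) ^ n * A n : ℝ) : ℂ) * z ^ n)
    (u := fun n => A n * (‖t‖ + 1) ^ n) (hs _ (by positivity))
    (fun n => by fun_prop) Metric.isOpen_ball
    (fun n z hz => by
      rw [norm_mul, norm_pow, Complex.norm_real, norm_mul, norm_pow, norm_neg, norm_one, one_pow,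
        one_mul, Real.norm_of_nonneg (hA n)]
      have : ‖z‖ ≤ ‖t‖ + 1 := by simpa using (mem_ball_zero_iff.1 hz).le
      have := hA n
      gcongr)
  exact h.differentiableAt (Metric.isOpen_ball.mem_nhds (by simp))

lemma altS_real (A : ℕ → ℝ) (x : ℝ) :
    altS A x = ((∑' n, ((-1) ^ n * A n) * x ^ n : ℝ) : ℂ) := by
  rw [altS, Complex.ofReal_tsum]
  refine tsum_congr fun n => ?_
  push_cast; ring


lemma altS_zero (A : ℕ → ℝ) : altS A 0 = (A 0 : ℂ) := by
  rw [altS, tsum_eq_single 0]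
  · simp
  · intro n hn; simp [hn]

lemma QAB.diff {q : ℝ} {A B : ℕ → ℝ} (H : QAB q A B) :
    Differentiable ℂ (altS A) ∧ Differentiable ℂ (altS B) :=
  ⟨altS_diff A (fun n => (H.pos n).1.le) fun x hx => (H.summable x hx).1,
    altS_diff B (fun n => (H.pos n).2.le) fun x hx => (H.summable x hx).2⟩

noncomputable def wronS (A B : ℕ → ℝ) (t : ℂ) : ℂ :=
  deriv (altS A) t * altS B t - altS A t * deriv (altS B) t

lemma QAB.wron {q : ℝ} {A B : ℕ → ℝ} (H : QAB q A B) (t : ℂ) :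
    wronS A B t = (q : ℂ) ^ 3 * wronS A B ((q : ℂ) ^ 2 * t)
      - (q : ℂ) * altS B ((q : ℂ) ^ 2 * t) ^ 2 := by
  have hm : HasDerivAt (fun t : ℂ => (q : ℂ) ^ 2 * t) ((q : ℂ) ^ 2) t := by
    simpa using (hasDerivAt_id t).const_mul ((q : ℂ) ^ 2)
  have hA := (H.diff.1 ((q : ℂ) ^ 2 * t)).hasDerivAt.comp t hm
  have hB := (H.diff.2 ((q : ℂ) ^ 2 * t)).hasDerivAt.comp t hm
  have e1 : altS A = fun t => altS A ((q : ℂ) ^ 2 * t) - t * altS B ((q : ℂ) ^ 2 * t) :=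
    funext H.feq1
  have e2 : altS B = fun t => (q : ℂ) * altS B ((q : ℂ) ^ 2 * t) + altS A t :=
    funext H.feq2
  have d1 : deriv (altS A) t = deriv (altS A) ((q : ℂ) ^ 2 * t) * (q : ℂ) ^ 2
      - (1 * altS B ((q : ℂ) ^ 2 * t) + t * (deriv (altS B) ((q : ℂ) ^ 2 * t) * (q : ℂ) ^ 2)) := by
    have := hA.sub ((hasDerivAt_id t).mul hB)
    have h2 := this.deriv
    conv_lhs => rw [e1]
    exact h2
  have d2 : deriv (altS B) t = (q : ℂ) * (deriv (altS B) ((q : ℂ) ^ 2 * t) * (q : ℂ) ^ 2)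
      + deriv (altS A) t := by
    have := (hB.const_mul (q : ℂ)).add (H.diff.1 t).hasDerivAt
    have h2 := this.deriv
    conv_lhs => rw [e2]
    exact h2
  unfold wronS
  rw [d2, H.feq2 t, d1, H.feq1 t]
  ring

lemma QAB.wron_iter {q : ℝ} {A B : ℕ → ℝ} (H : QAB q A B) (t : ℂ) (k : ℕ) :
    wronS A B t = (q : ℂ) ^ (3 * k) * wronS A B (((q : ℂ) ^ 2) ^ k * t)
      - ∑ i ∈ Finset.range k, (q : ℂ) ^ (3 * i + 1) * altS B (((q : ℂ) ^ 2) ^ (i + 1) * t) ^ 2 := by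
  induction k with
  | zero => simp
  | succ k ih =>
    rw [ih, Finset.sum_range_succ, H.wron (((q : ℂ) ^ 2) ^ k * t), ← mul_assoc ((q : ℂ) ^ 2),
      ← pow_succ']
    ring

lemma QAB.wron_ne {q : ℝ} {A B : ℕ → ℝ} (H : QAB q A B) (x : ℝ) : wronS A B (x : ℂ) ≠ 0 := by
  intro h0
  have hq0 := H.hq0
  have hcA : Continuous (deriv (altS A)) :=
    ((H.diff.1.contDiff (n := 1)).continuous_deriv le_rfl)
  have hcB : Continuous (deriv (altS B)) :=
    ((H.diff.2.contDiff (n := 1)).continuous_deriv le_rfl)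
  have hcW : Continuous (wronS A B) :=
    (hcA.mul H.diff.2.continuous).sub (H.diff.1.continuous.mul hcB)
  have hnq : ‖(q : ℂ)‖ < 1 := by
    rw [Complex.norm_real, Real.norm_of_nonneg hq0.le]; exact H.hq1
  have hp : Tendsto (fun k : ℕ => ((q : ℂ) ^ 2) ^ k * (x : ℂ)) atTop (𝓝 0) := by
    have : ‖(q : ℂ) ^ 2‖ < 1 := by
      rw [norm_pow]; exact pow_lt_one₀ (norm_nonneg _) hnq (by norm_num)
    simpa using (tendsto_pow_atTop_nhds_zero_of_norm_lt_one this).mul_const (x : ℂ)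
  have h3 : Tendsto (fun k : ℕ => (q : ℂ) ^ (3 * k)) atTop (𝓝 0) := by
    have : ‖(q : ℂ) ^ 3‖ < 1 := by
      rw [norm_pow]; exact pow_lt_one₀ (norm_nonneg _) hnq (by norm_num)
    simpa [pow_mul] using tendsto_pow_atTop_nhds_zero_of_norm_lt_one this
  have hW := h3.mul ((hcW.tendsto 0).comp hp)
  rw [zero_mul] at hW
  have hre : ∀ y : ℝ, altS B (y : ℂ) = ((altS B (y : ℂ)).re : ℂ) := by
    intro y
    rw [altS_real, Complex.ofReal_re]
  set s : ℝ → ℝ := fun y => (altS B (y : ℂ)).re with hs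
  have hsum : ∀ k, (q : ℂ) ^ (3 * k) * wronS A B (((q : ℂ) ^ 2) ^ k * x) =
      ((∑ i ∈ Finset.range k, q ^ (3 * i + 1) * s ((q ^ 2) ^ (i + 1) * x) ^ 2 : ℝ) : ℂ) := by
    intro k
    have := H.wron_iter (x : ℂ) k
    rw [h0] at this
    rw [eq_comm, sub_eq_zero] at this
    rw [this]
    push_cast
    refine Finset.sum_congr rfl fun i _ => ?_
    have h := hre ((q ^ 2) ^ (i + 1) * x)
    push_cast at h
    rw [h]
    simp [hs]
  have hT : Tendsto (fun k => ∑ i ∈ Finset.range k, q ^ (3 * i + 1) *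
      s ((q ^ 2) ^ (i + 1) * x) ^ 2) atTop (𝓝 0) := by
    have := (Complex.continuous_re.tendsto 0).comp (hW.congr hsum)
    simpa only [Function.comp_def, Complex.ofReal_re, Complex.zero_re] using this
  have hm : Monotone (fun k => ∑ i ∈ Finset.range k, q ^ (3 * i + 1) *
      s ((q ^ 2) ^ (i + 1) * x) ^ 2) := by
    refine monotone_nat_of_le_succ fun k => ?_
    rw [Finset.sum_range_succ]
    have : 0 ≤ q ^ (3 * k + 1) * s ((q ^ 2) ^ (k + 1) * x) ^ 2 := by positivity
    linarith
  have hz : ∀ i, s ((q ^ 2) ^ (i + 1) * x) = 0 := by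
    intro i
    have h1 := hm.ge_of_tendsto hT (i + 1)
    have h2 := hm (Nat.zero_le i)
    simp only [Finset.sum_range_succ, Finset.range_zero, Finset.sum_empty] at h1 h2
    have h4 : 0 ≤ s ((q ^ 2) ^ (i + 1) * x) ^ 2 := sq_nonneg _
    have h5 : 0 < q ^ (3 * i + 1) := by positivity
    have : s ((q ^ 2) ^ (i + 1) * x) ^ 2 = 0 := by nlinarith
    exact pow_eq_zero_iff (by norm_num) |>.1 this
  have hl := (H.diff.2.continuous.tendsto 0).comp ((tendsto_add_atTop_iff_nat 1).2 hp)
  have hl2 : Tendsto (fun _ : ℕ => (0 : ℂ)) atTop (𝓝 (altS B 0)) := by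
    refine hl.congr fun i => ?_
    have h := hre ((q ^ 2) ^ (i + 1) * x)
    have h' := hz i
    simp only [hs] at h'
    rw [h'] at h
    push_cast at h
    simpa using h
  have := tendsto_nhds_unique hl2 tendsto_const_nhds
  rw [altS_zero] at this
  exact (H.pos 0).2.ne' (by exact_mod_cast this)


lemma good_of_polys (P : ℕ → Polynomial ℝ) (f : ℂ → ℂ) (h0 : ∀ N, (P N).coeff 0 = 1)
    (hr : ∀ N, ∀ t : ℂ, Polynomial.aeval t (P N) = 0 → ∃ x : ℝ, 0 < x ∧ t = x)
    (b : ℕ → ℝ) (hb : ∀ j, 0 ≤ b j) (hbs : Summable b)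
    (hP : ∀ N m, |(P N).coeff (m + 1)| ≤ b m ^ (m + 1))
    (hf : ∀ t : ℂ, Tendsto (fun N => Polynomial.aeval t (P N)) atTop (𝓝 (f t)))
    (hne : ∀ x : ℝ, f x = 0 → ¬ HasDerivAt f 0 (x : ℂ)) : GoodProd f := by
  choose u hu0 hub hu using fun N => realrooted_seq (P N) (h0 N) (hr N) b hb (hP N)
  obtain ⟨v, hv0, hvb, -, hv⟩ := compact_limit u b hbs hu0 hub f
    (fun t => (hf t).congr fun N => hu N t) (fun _ => Set.univ) (fun _ => isClosed_univ)
    (fun _ => Eventually.of_forall fun _ => Set.mem_univ _)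
  have hs : Summable v := hbs.of_nonneg_of_le hv0 hvb
  refine ⟨v, hv0, hs, hv, fun i j hij h => ?_⟩
  by_contra h1
  refine hne (1 / v i) ?_ (double_zero f v hs hv i j hij h h1)
  rw [hv]
  refine (prod_zero_iff v hs _).2 ⟨i, ?_⟩
  have : (v i : ℂ) ≠ 0 := by exact_mod_cast h1
  push_cast
  field_simp

lemma QAB.bsum {q : ℝ} {A B : ℕ → ℝ} (H : QAB q A B) :
    (∀ j : ℕ, 0 ≤ (1 / (1 - q)) ^ 3 * q ^ j) ∧ Summable fun j : ℕ => (1 / (1 - q)) ^ 3 * q ^ j := by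
  have hq0 := H.hq0
  have : 0 < 1 / (1 - q) := one_div_pos.2 (by linarith [H.hq1])
  exact ⟨fun j => by positivity, (summable_geometric_of_lt_one hq0.le H.hq1).mul_left _⟩

lemma abs_neg_one_pow_mul (n : ℕ) (x : ℝ) (h : 0 ≤ (-1) ^ n * x) : |x| = (-1) ^ n * x := by
  rw [← abs_of_nonneg h, abs_mul, abs_pow]; simp

lemma QAB.goodA {q : ℝ} {A B : ℕ → ℝ} (H : QAB q A B) : GoodProd (altS A) := by
  have hq0 := H.hq0
  refine good_of_polys (fun N => (qPS q (N + 1)).1) _ ?_ ?_ _ H.bsum.1 H.bsum.2 ?_ ?_ ?_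
  · intro N
    simpa [qPa] using qPa_zero' q (N + 1)
  · intro N t h
    exact qPS_roots q hq0 N t (Or.inl h)
  · intro N m
    rw [abs_neg_one_pow_mul (m + 1) _ (qP_nonneg q hq0 (N + 1) (m + 1)).1]
    exact ((H.le (N + 1) (m + 1)).1).trans (H.bound' m).1
  · intro t
    exact (tendsto_add_atTop_iff_nat 1).2 (H.tendstoC t).1
  · intro x h0 hd
    refine H.wron_ne x ?_
    rw [wronS, h0, hd.deriv]
    ring

lemma QAB.goodB {q : ℝ} {A B : ℕ → ℝ} (H : QAB q A B) :
    GoodProd (altS fun n => B n / B 0) := by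
  have hq0 := H.hq0
  have hB0 := (H.pos 0).2
  have hb1 : ∀ N, 1 ≤ qPb q N 0 := by
    intro N
    have : Monotone fun N => qPb q N 0 := monotone_nat_of_le_succ fun N => (qP_mono q hq0 N 0).2
    have := this (Nat.zero_le N)
    simpa [qPb_init] using this
  have eS : (altS fun n => B n / B 0) = fun t => ((1 / B 0 : ℝ) : ℂ) * altS B t := by
    funext t
    rw [altS, altS, ← tsum_mul_left]
    refine tsum_congr fun n => ?_
    push_cast; ring
  refine good_of_polys
    (fun N => Polynomial.C (1 / qPb q (N + 1) 0) * (qPS q (N + 1)).2) _ ?_ ?_ _ H.bsum.1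
    H.bsum.2 ?_ ?_ ?_
  · intro N
    have := hb1 (N + 1)
    rw [Polynomial.coeff_C_mul]
    have e : qPb q (N + 1) 0 = (qPS q (N + 1)).2.coeff 0 := by simp [qPb]
    rw [← e]
    field_simp
  · intro N t h
    refine qPS_roots q hq0 N t (Or.inr ?_)
    rw [map_mul, Polynomial.aeval_C] at h
    refine (mul_eq_zero.1 h).resolve_left ?_
    have := hb1 (N + 1)
    have h2 : (1 / qPb q (N + 1) 0) ≠ 0 := by positivity
    simpa using h2
  · intro N m
    have h1 := hb1 (N + 1)
    rw [Polynomial.coeff_C_mul, abs_mul,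
      abs_neg_one_pow_mul (m + 1) _ (qP_nonneg q hq0 (N + 1) (m + 1)).2]
    have h2 : |1 / qPb q (N + 1) 0| ≤ 1 := by
      rw [abs_of_nonneg (by positivity)]
      exact (div_le_one (by linarith)).2 h1
    have h3 := (qP_nonneg q hq0 (N + 1) (m + 1)).2
    have h4 := ((H.le (N + 1) (m + 1)).2).trans (H.bound' m).2
    calc _ ≤ 1 * qPb q (N + 1) (m + 1) := mul_le_mul_of_nonneg_right h2 h3
      _ ≤ _ := by rw [one_mul]; exact h4
  · intro t
    rw [eS]
    have h1 := (tendsto_add_atTop_iff_nat 1).2 (H.tendstoC t).2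
    have h2 := (tendsto_add_atTop_iff_nat 1).2 (H.tendsto 0).2
    have h3 := (Complex.continuous_ofReal.tendsto _).comp
      ((tendsto_const_nhds (x := (1 : ℝ))).div h2 hB0.ne')
    refine (h3.mul h1).congr fun N => ?_
    rw [map_mul, Polynomial.aeval_C]
    rfl
  · intro x h0 hd
    refine H.wron_ne x ?_
    have hc : ((1 / B 0 : ℝ) : ℂ) ≠ 0 := by
      have : (1 / B 0 : ℝ) ≠ 0 := by positivity
      exact_mod_cast this
    rw [eS] at h0 hd
    have e1 : altS B x = 0 := (mul_eq_zero.1 h0).resolve_left hc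
    have e2 : deriv (altS B) x = 0 := by
      have := hd.deriv
      rw [deriv_const_mul _ (H.diff.2 _)] at this
      exact (mul_eq_zero.1 this).resolve_left hc
    rw [wronS, e1, e2]
    ring


lemma qPoch_summable (a q : ℝ) (hq0 : 0 < q) (hq1 : q < 1) :
    Summable fun k : ℕ => ‖-(a * q ^ k)‖ := by
  simp only [norm_neg]
  exact ((summable_geometric_of_lt_one hq0.le hq1).mul_left a).norm

lemma qPoch_ne (q x : ℝ) (hq0 : 0 < q) (hq1 : q < 1) (hx : 0 < x) : qPochInf (q ^ x) q ≠ 0 := by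
  have h := tprod_one_add_ne_zero_of_summable (f := fun k : ℕ => -(q ^ x * q ^ k)) (fun k => by
    have h1 : q ^ x < 1 := Real.rpow_lt_one hq0.le hq1 hx
    have h2 : q ^ k ≤ 1 := pow_le_one₀ hq0.le hq1.le
    have h3 : 0 < q ^ k := by positivity
    have h4 : 0 < q ^ x := by positivity
    have : q ^ x * q ^ k < 1 := by nlinarith
    linarith) (qPoch_summable _ q hq0 hq1)
  simp only [← sub_eq_add_neg] at h
  rw [qPochInf]
  exact h

lemma qPoch_step (q x : ℝ) (hq0 : 0 < q) (hq1 : q < 1) :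
    qPochInf (q ^ x) q = (1 - q ^ x) * qPochInf (q ^ (x + 1)) q := by
  have e : ∀ k : ℕ, 1 + -(q ^ (x + 1) * q ^ k) = 1 - q ^ x * q ^ (k + 1) := by
    intro k
    rw [Real.rpow_add_one hq0.ne', pow_succ]; ring
  have hm : Multipliable fun k : ℕ => (1 - q ^ x * q ^ (k + 1)) := by
    have := multipliable_one_add_of_summable (f := fun k : ℕ => -(q ^ (x + 1) * q ^ k))
      (qPoch_summable _ q hq0 hq1)
    simp only [e] at this
    exact this
  have h1 := tprod_eq_zero_mul' (f := fun k : ℕ => 1 - q ^ x * q ^ k) hm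
  have h2 : qPochInf (q ^ (x + 1)) q = ∏' k : ℕ, (1 - q ^ x * q ^ (k + 1)) := by
    rw [qPochInf]
    refine tprod_congr fun k => ?_
    rw [← e k, sub_eq_add_neg]
  rw [h2, qPochInf, h1, pow_zero, mul_one]

lemma qGamma_pos_ne (q x : ℝ) (hq0 : 0 < q) (hq1 : q < 1) (hx : 0 < x) : qGamma q x ≠ 0 := by
  have h1 := qPoch_ne q x hq0 hq1 hx
  have h2 := qPoch_ne q 1 hq0 hq1 one_pos
  rw [Real.rpow_one] at h2
  have h3 : (1 - q) ^ (1 - x) ≠ 0 := (Real.rpow_pos_of_pos (by linarith) _).ne'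
  rw [qGamma]
  exact div_ne_zero (mul_ne_zero h2 h3) h1

lemma qGamma_step (q x : ℝ) (hq0 : 0 < q) (hq1 : q < 1) (hx : 0 < x) :
    (1 - q) * qGamma q (x + 1) = (1 - q ^ x) * qGamma q x := by
  have h1 := qPoch_ne q (x + 1) hq0 hq1 (by linarith)
  have h2 : 1 - q ^ x ≠ 0 := by
    have := Real.rpow_lt_one hq0.le hq1 hx
    linarith
  have h3 : 0 < 1 - q := by linarith
  rw [qGamma, qGamma, qPoch_step q x hq0 hq1]
  have e : (1 - q) ^ (1 - x) = (1 - q) ^ (1 - (x + 1)) * (1 - q) := by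
    rw [← Real.rpow_add_one h3.ne']; congr 1; ring
  rw [e]
  field_simp

noncomputable def aML (γ q : ℝ) (n : ℕ) : ℝ :=
  q ^ (n * (n - 1)) / ((1 - q) ^ 2) ^ n * qGamma q (γ + 1) / qGamma q (2 * n + γ + 1)

lemma aML_zero (γ q : ℝ) (hq0 : 0 < q) (hq1 : q < 1) (hγ : 0 ≤ γ) : aML γ q 0 = 1 := by
  have := qGamma_pos_ne q (γ + 1) hq0 hq1 (by linarith)
  simp [aML, this]

lemma aML_step (γ q : ℝ) (hq0 : 0 < q) (hq1 : q < 1) (hγ : 0 ≤ γ) (n : ℕ) :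
    aML γ q (n + 1) * ((1 - q ^ (γ + 1) * (q ^ 2) ^ n) * (1 - q ^ (γ + 2) * (q ^ 2) ^ n))
      = (q ^ 2) ^ n * aML γ q n := by
  have hn : (0 : ℝ) ≤ n := Nat.cast_nonneg n
  have h1 := qGamma_step q (2 * n + γ + 1) hq0 hq1 (by linarith)
  have h2 := qGamma_step q (2 * n + γ + 1 + 1) hq0 hq1 (by linarith)
  have g0 := qGamma_pos_ne q (2 * n + γ + 1) hq0 hq1 (by linarith)
  have g1 := qGamma_pos_ne q (2 * n + γ + 1 + 1) hq0 hq1 (by linarith)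
  have g2 := qGamma_pos_ne q (2 * n + γ + 1 + 1 + 1) hq0 hq1 (by linarith)
  have e1 : q ^ (γ + 1) * (q ^ 2) ^ n = q ^ (2 * n + γ + 1) := by
    rw [← pow_mul, ← Real.rpow_natCast, ← Real.rpow_add hq0]
    congr 1; push_cast; ring
  have e2 : q ^ (γ + 2) * (q ^ 2) ^ n = q ^ (2 * n + γ + 1 + 1) := by
    rw [← pow_mul, ← Real.rpow_natCast, ← Real.rpow_add hq0]
    congr 1; push_cast; ring
  have e3 : qGamma q (2 * ((n + 1 : ℕ) : ℝ) + γ + 1) = qGamma q (2 * n + γ + 1 + 1 + 1) := by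
    congr 1; push_cast; ring
  have e4 : q ^ ((n + 1) * (n + 1 - 1)) = (q ^ 2) ^ n * q ^ (n * (n - 1)) := by
    rw [← pow_mul, ← pow_add]
    congr 1
    rcases n with _ | n
    · simp
    · simp only [Nat.add_sub_cancel]; ring
  rw [e1, e2, aML, aML, e3, e4]
  have h3 : 1 - q ≠ 0 := by linarith
  have key : (1 - q) ^ 2 * qGamma q (2 * n + γ + 1 + 1 + 1) =
      (1 - q ^ (2 * n + γ + 1)) * (1 - q ^ (2 * n + γ + 1 + 1)) * qGamma q (2 * n + γ + 1) := by
    calc _ = (1 - q) * ((1 - q) * qGamma q (2 * n + γ + 1 + 1 + 1)) := by ring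
      _ = (1 - q ^ (2 * n + γ + 1 + 1)) * ((1 - q) * qGamma q (2 * n + γ + 1 + 1)) := by
        rw [h2]; ring
      _ = _ := by rw [h1]; ring
  set X := (1 - q ^ (2 * n + γ + 1))
  set Y := (1 - q ^ (2 * n + γ + 1 + 1))
  set G0 := qGamma q (2 * n + γ + 1)
  set G2 := qGamma q (2 * n + γ + 1 + 1 + 1)
  rw [pow_succ ((1 - q) ^ 2) n]
  field_simp
  linear_combination (-qGamma q (γ + 1)) * key

lemma qML_eq (γ σ q : ℝ) (hq0 : 0 < q) (hq1 : q < 1) (hγ : 0 ≤ γ) (z : ℂ) :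
    qML γ σ q z = ((1 / qGamma q (γ + 1) : ℝ) : ℂ) *
      altS (aML γ q) ((((σ * (1 - q) : ℝ) : ℂ) * z) ^ 2) := by
  have hG := qGamma_pos_ne q (γ + 1) hq0 hq1 (by linarith)
  have h3 : 1 - q ≠ 0 := by linarith
  rw [qML, altS, ← tsum_mul_left]
  refine tsum_congr fun n => ?_
  have e : ((-1) ^ n * σ ^ (2 * n) * q ^ (n * (n - 1)) / qGamma q (2 * n + γ + 1) : ℝ) =
      1 / qGamma q (γ + 1) * ((-1) ^ n * aML γ q n) * ((σ * (1 - q)) ^ 2) ^ n := by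
    have hn : (0 : ℝ) ≤ n := Nat.cast_nonneg n
    have hg := qGamma_pos_ne q (2 * n + γ + 1) hq0 hq1 (by linarith)
    rw [aML, mul_pow σ, mul_pow (σ ^ 2), ← pow_mul σ]
    field_simp
  rw [e]
  push_cast
  rw [pow_mul z, mul_pow (_ * _) z 2, mul_pow _ (z ^ 2) n]
  ring

lemma good_zero (q : ℝ) (hq0 : 0 < q) (hq1 : q < 1) : GoodProd (altS (aML 0 q)) := by
  have hx : ∀ n : ℕ, 1 - q * (q ^ 2) ^ n ≠ 0 := fun n => by
    have := (q_aux q hq0 hq1 n).2; linarith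
  have H : QAB q (aML 0 q) (fun n => aML 0 q n / (1 - q * (q ^ 2) ^ n)) := by
    refine ⟨hq0, hq1, aML_zero 0 q hq0 hq1 le_rfl, fun n => ?_, fun n => ?_⟩
    · have := aML_step 0 q hq0 hq1 le_rfl n
      rw [zero_add, zero_add, Real.rpow_one, Real.rpow_two] at this
      have h := hx n
      rw [← mul_div_assoc, ← this]
      field_simp
      ring
    · exact div_mul_cancel₀ _ (hx n)
  exact H.goodA

lemma good_one (q : ℝ) (hq0 : 0 < q) (hq1 : q < 1) : GoodProd (altS (aML 1 q)) := by
  have h1 : 1 - q ≠ 0 := by linarith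
  have ha0 := aML_zero 1 q hq0 hq1 zero_le_one
  have H : QAB q (fun n => aML 1 q n / (1 - q) * (1 - q * (q ^ 2) ^ n))
      (fun n => aML 1 q n / (1 - q)) := by
    refine ⟨hq0, hq1, ?_, fun n => ?_, fun n => rfl⟩
    · rw [ha0]; simp [h1]
    · have := aML_step 1 q hq0 hq1 zero_le_one n
      have e1 : q ^ ((1 : ℝ) + 1) = q ^ 2 := by rw [← Real.rpow_natCast]; norm_num
      have e2 : q ^ ((1 : ℝ) + 2) = q ^ 3 := by rw [← Real.rpow_natCast]; norm_num
      rw [e1, e2] at this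
      rw [← mul_div_assoc, ← this]
      ring
  have := H.goodB
  convert this using 3 with n
  rw [ha0]
  field_simp

lemma good_hutch (q γ : ℝ) (hq0 : 0 < q) (hq1 : q < 1) (hγ0 : 0 ≤ γ)
    (h : 1 < q⁻¹ * (1 - q) * (1 - q ^ (γ + 1)) * (1 - q ^ (γ + 2))) :
    GoodProd (altS (aML γ q)) := by
  have a1 : q ^ (γ + 1) < 1 := Real.rpow_lt_one hq0.le hq1 (by linarith)
  have a2 : q ^ (γ + 2) < 1 := Real.rpow_lt_one hq0.le hq1 (by linarith)
  have p1 : 0 < q ^ (γ + 1) := by positivity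
  have p2 : 0 < q ^ (γ + 2) := by positivity
  have hq : q < 1 / 2 := by
    have b0 : 0 < q⁻¹ * (1 - q) := mul_pos (inv_pos.2 hq0) (by linarith)
    have b1 : q⁻¹ * (1 - q) * (1 - q ^ (γ + 1)) * (1 - q ^ (γ + 2)) ≤ q⁻¹ * (1 - q) := by
      rw [mul_assoc]
      refine mul_le_of_le_one_right b0.le ?_
      nlinarith
    have b2 : 1 < q⁻¹ * (1 - q) := h.trans_le b1
    rw [inv_mul_eq_div, lt_div_iff₀ hq0] at b2
    linarith
  set R : ℕ → ℝ := fun n => (1 - q ^ (γ + 1) * (q ^ 2) ^ n) * (1 - q ^ (γ + 2) * (q ^ 2) ^ n) /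
    (q ^ 2) ^ n with hR
  have hle1 : ∀ n : ℕ, (q ^ 2) ^ n ≤ 1 := fun n => pow_le_one₀ (sq_nonneg q) (by nlinarith)
  have hpos : ∀ n : ℕ, 0 < (q ^ 2) ^ n := fun n => by positivity
  have hX : ∀ n : ℕ, 0 < 1 - q ^ (γ + 1) * (q ^ 2) ^ n := fun n => by
    have := hle1 n
    have := hpos n
    nlinarith
  have hY : ∀ n : ℕ, 0 < 1 - q ^ (γ + 2) * (q ^ 2) ^ n := fun n => by
    have := hle1 n
    have := hpos n
    nlinarith
  have hRpos : ∀ n, 0 < R n := fun n => div_pos (mul_pos (hX n) (hY n)) (hpos n)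
  have hRle : ∀ n, R n ≤ q ^ 2 * R (n + 1) := by
    intro n
    have e : q ^ 2 * R (n + 1) = (1 - q ^ (γ + 1) * (q ^ 2) ^ (n + 1)) *
        (1 - q ^ (γ + 2) * (q ^ 2) ^ (n + 1)) / (q ^ 2) ^ n := by
      simp only [hR]
      rw [pow_succ (q ^ 2) n]
      field_simp
    rw [e]
    have h1 : (q ^ 2) ^ (n + 1) ≤ (q ^ 2) ^ n :=
      pow_le_pow_of_le_one (sq_nonneg q) (by nlinarith) (Nat.le_succ n)
    have := (hX n).le
    have := (hY n).le
    have := (hX (n + 1)).le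
    simp only [hR]
    gcongr
  refine hutchinson q hq0 hq (fun n => Nat.casesOn n (q ^ 2 * R 0) R) (aML γ q) ?_ ?_
    (aML_zero γ q hq0 hq1 hγ0) ?_
  · exact mul_pos (by positivity) (hRpos 0)
  · intro n
    rcases n with _ | n
    · exact le_rfl
    · exact hRle n
  · intro n
    have := aML_step γ q hq0 hq1 hγ0 n
    simp only [hR]
    have h1 := hpos n
    rw [div_mul_eq_mul_div, eq_div_iff h1.ne']
    linarith


theorem stmt3 (q σ γ : ℝ) (hq0 : 0 < q) (hq1 : q < 1) (hσ : 0 < σ)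
    (hγ0 : 0 ≤ γ) (hγ2 : γ < 2) (hR : condR q γ)
    (ε : ℕ → ℝ) (hmono : StrictMono ε) (hpos : ∀ n, 0 < ε n)
    (hzero : ∀ n, qML γ σ q (ε n : ℂ) = 0)
    (hall : ∀ x : ℝ, 0 < x → qML γ σ q (x : ℂ) = 0 → ∃ n, x = ε n) :
    {z : ℂ | qML γ σ q z = 0}.Infinite ∧
    (∀ z : ℂ, qML γ σ q z = 0 → z.im = 0) ∧
    (∀ z : ℂ, qML γ σ q z =
      ((1 / qGamma q (γ + 1) : ℝ) : ℂ) * ∏' n : ℕ, (1 - z ^ 2 / (ε n : ℂ) ^ 2)) ∧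
    (∀ K : Set ℂ, IsCompact K →
      TendstoUniformlyOn
        (fun (N : ℕ) (z : ℂ) =>
          ((1 / qGamma q (γ + 1) : ℝ) : ℂ) *
            ∏ n ∈ Finset.range N, (1 - z ^ 2 / (ε n : ℂ) ^ 2))
        (qML γ σ q) Filter.atTop K) := by
  have hgood : GoodProd (altS (aML γ q)) := by
    rcases hR with (h | h) | ⟨_, _, h⟩
    · subst h; exact good_zero q hq0 hq1
    · subst h; exact good_one q hq0 hq1
    · exact good_hutch q γ hq0 hq1 hγ0 h
  exact final_step (qML γ σ q) (altS (aML γ q)) (σ * (1 - q)) (qGamma q (γ + 1))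
    (mul_pos hσ (by linarith)) (qGamma_pos_ne q (γ + 1) hq0 hq1 (by linarith))
    (qML_eq γ σ q hq0 hq1 hγ0) hgood ε hmono hpos hzero hall
end
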